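/- arXiv:2203.06733 — 3 statements merged into one kernel-verified Lean document; each statement's English description precedes it below -/
import Mathlib

section
/- Let f_k, for multi-indices k ∈ (ℕ∪{0})^d with ‖k‖ ≤ K, be almost periodic tempered distributions on ℝ^d, and set f = Σ_{‖k‖≤K} x^k f_k, where x^k f_k denotes the tempered distribution φ ↦ f_k(x^k φ) and x^k = x_1^{k_1}⋯x_d^{k_d}. If supp f has bounded density, then supp f_k has bounded density for every k with ‖k‖ ≤ K. -/
open MeasureTheory SchwartzMap Metric Set
open scoped Pointwise RealInnerProductSpace ENNReal NNReal

noncomputable section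

/-- Euclidean space `ℝ^d`. -/
abbrev Rd (d : ℕ) : Type := EuclideanSpace ℝ (Fin d)

/-- The space `S*(ℝ^d)` of tempered distributions: continuous linear functionals
on the Schwartz space `S(ℝ^d)`. -/
abbrev TemperedDist (d : ℕ) : Type := SchwartzMap (Rd d) ℂ →L[ℂ] ℂ

/-- The Fourier transform of a tempered distribution: `f̂(φ) = f(φ̂)`. -/
def fourierTD {d : ℕ} (f : TemperedDist d) : TemperedDist d :=
  f.comp (fourierTransformCLM ℂ)

/-- The support of a tempered distribution: `x ∈ supp f` iff for every open
neighbourhood `U` of `x` there is a smooth compactly supported test function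
supported in `U` on which `f` does not vanish. -/
def tdSupport {d : ℕ} (f : TemperedDist d) : Set (Rd d) :=
  {x | ∀ U : Set (Rd d), IsOpen U → x ∈ U →
    ∃ φ : SchwartzMap (Rd d) ℂ, HasCompactSupport (⇑φ) ∧ tsupport (⇑φ) ⊆ U ∧ f φ ≠ 0}

/-- A set is locally finite if its intersection with every ball is finite. -/
def LocFinite {d : ℕ} (A : Set (Rd d)) : Prop :=
  ∀ (x : Rd d) (r : ℝ), (A ∩ Metric.ball x r).Finite

/-- A set is uniformly discrete if distances between distinct points are
bounded below by a positive constant. -/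
def UniformlyDiscrete {d : ℕ} (A : Set (Rd d)) : Prop :=
  ∃ η > (0:ℝ), ∀ x ∈ A, ∀ y ∈ A, x ≠ y → η ≤ dist x y

/-- A set is polynomially discrete (p-discrete) if
`|x - x'| ≥ c min{1, |x|^{-h}}` for distinct points `x, x'` of the set. -/
def PDiscrete {d : ℕ} (A : Set (Rd d)) : Prop :=
  ∃ c > (0:ℝ), ∃ h > (0:ℝ), ∀ x ∈ A, ∀ y ∈ A, x ≠ y →
    c * (if ‖x‖ ≤ 1 then 1 else ‖x‖ ^ (-h)) ≤ dist x y

/-- A set has bounded density if it is locally finite and the number of its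
points in balls of radius 1 is uniformly bounded. -/
def BoundedDensity {d : ℕ} (A : Set (Rd d)) : Prop :=
  LocFinite A ∧ ∃ N : ℕ, ∀ x : Rd d, (A ∩ Metric.ball x 1).ncard ≤ N

/-- A set is relatively dense if it intersects every ball of some fixed radius `R`. -/
def RelDense {d : ℕ} (A : Set (Rd d)) : Prop :=
  ∃ R : ℝ, 0 < R ∧ ∀ x : Rd d, ∃ a ∈ A, dist x a ≤ R

/-- A full-rank lattice in `ℝ^d` is the image of `ℤ^d` under an invertible
linear operator. -/
def IsFullRankLattice {d : ℕ} (L : Set (Rd d)) : Prop :=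
  ∃ T : Rd d →ₗ[ℝ] Rd d, Function.Bijective T ∧
    L = T '' {x : Rd d | ∀ i, ∃ n : ℤ, x i = (n : ℝ)}

/-- The multi-indices `k ∈ (ℕ ∪ {0})^d` with `‖k‖ = k₁ + ⋯ + k_d ≤ K`. -/
def mIdx (d K : ℕ) : Finset (Fin d → ℕ) :=
  (Finset.Iic fun _ => K).filter fun k => (∑ i, k i) ≤ K

/-- Partial derivative in the `i`-th coordinate direction. -/
def pderiv' {d : ℕ} (i : Fin d) (φ : Rd d → ℂ) : Rd d → ℂ :=
  fun x => fderiv ℝ φ x (EuclideanSpace.single i (1:ℝ))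

/-- The mixed partial derivative `D^k = ∂^{k₁}_{x₁} ⋯ ∂^{k_d}_{x_d}`. -/
def Dmulti {d : ℕ} (k : Fin d → ℕ) : (Rd d → ℂ) → (Rd d → ℂ) :=
  ((List.finRange d).map fun i => (pderiv' i)^[k i]).foldr (· ∘ ·) id

/-- The action of `D^k δ_λ` on a test function: `φ ↦ (-1)^{‖k‖} (D^k φ)(λ)`. -/
def dkDelta {d : ℕ} (k : Fin d → ℕ) (lam : Rd d) (φ : SchwartzMap (Rd d) ℂ) : ℂ :=
  (-1 : ℂ) ^ (∑ i, k i) * Dmulti k (⇑φ) lam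

/-- The exponential `e^{2πi⟨x,w⟩}`. -/
def e2pi {d : ℕ} (x w : Rd d) : ℂ :=
  Complex.exp (((2 * Real.pi : ℝ) : ℂ) * Complex.I * ((⟪x, w⟫ : ℝ) : ℂ))

/-- A trigonometric polynomial: a finite sum `Σ c_ω e^{2πi⟨x,ω⟩}`. -/
def IsTrigPoly {d : ℕ} (P : Rd d → ℂ) : Prop :=
  ∃ (n : ℕ) (cc : Fin n → ℂ) (w : Fin n → Rd d),
    ∀ x, P x = ∑ i, cc i * e2pi x (w i)

/-- The monomial `x^m = x₁^{m₁} ⋯ x_d^{m_d}` (as a complex number). -/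
def monom {d : ℕ} (m : Fin d → ℕ) (x : Rd d) : ℂ := ((∏ i, (x i) ^ (m i) : ℝ) : ℂ)

/-- The total variation of the pure point measure with masses `b` on the open
ball `B(0,r)`: `Σ_{|γ| < r} |b(γ)|` (as an extended nonnegative real). -/
def ballVar {d : ℕ} (b : Rd d → ℂ) (r : ℝ) : ℝ≥0∞ :=
  ∑' γ : Rd d, if ‖γ‖ < r then (‖b γ‖₊ : ℝ≥0∞) else 0

/-- The pure point measure `μ = Σ_λ a(λ) δ_λ` belongs to `S*(ℝ^d)` and is
represented there by the tempered distribution `f`: its support is countable,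
`Σ_λ |a(λ)| |φ(λ)| < ∞` for every Schwartz function `φ`, and the (automatically
continuous) functional `φ ↦ Σ_λ a(λ) φ(λ)` coincides with `f`. -/
def RepMeasure {d : ℕ} (a : Rd d → ℂ) (f : TemperedDist d) : Prop :=
  {x | a x ≠ 0}.Countable ∧
  (∀ φ : SchwartzMap (Rd d) ℂ, Summable fun lam => ‖a lam‖ * ‖φ lam‖) ∧
  (∀ φ : SchwartzMap (Rd d) ℂ, f φ = ∑' lam, a lam * φ lam)

/-- A continuous function on `ℝ^d` is almost periodic if for every `ε > 0` its
set of `ε`-almost periods is relatively dense. -/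
def APFunction {d : ℕ} (g : Rd d → ℂ) : Prop :=
  Continuous g ∧ ∀ ε > (0:ℝ), RelDense {τ : Rd d | ∀ t, ‖g (t + τ) - g t‖ < ε}

/-- A tempered distribution is almost periodic if for every smooth compactly
supported `ψ` the function `t ↦ f(ψ(t - ·))` is almost periodic. -/
def APDistribution {d : ℕ} (f : TemperedDist d) : Prop :=
  ∀ ψ : Rd d → ℂ, ContDiff ℝ (⊤ : ℕ∞) ψ → HasCompactSupport ψ →
    ∀ Φ : Rd d → SchwartzMap (Rd d) ℂ, (∀ t y, Φ t y = ψ (t - y)) →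
      APFunction fun t => f (Φ t)

/-!
Translate test functions far away. If `φ` is a test function, `t = r • w` and `r → ∞` through
common near-periods of the finitely many almost periodic functions `s ↦ f_k((x - s)^m φ(x - s))`,
`m ≤ k`, then expanding `x^k = (t + (x - t))^k` shows that `r^{-K} f(φ(· - t))` tends to
`∑_{|k| = K} w^k f_k(φ)`. For a test function not annihilated by some top-degree `f_k`, this
polynomial in `w` is nonzero, and one `w` can be chosen for finitely many test functions
simultaneously. Hence any finite configuration of points of `supp f_k`, `|k| = K`, is
approximated by a translate of a configuration in `supp f`, so `supp f_k` has bounded density.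
Subtracting the top-degree terms from `f` and inducting on `K` treats the remaining coefficients.
-/

section

open Filter
open scoped Topology ContDiff Manifold

/-! ### Sets of bounded density -/

section BoundedDensity

variable {d : ℕ} {A B : Set (Rd d)}

theorem LocFinite.of_finite_inter_ball_one (h : ∀ x, (A ∩ ball x 1).Finite) : LocFinite A := by
  intro x r
  obtain ⟨t, -, ht, hcover⟩ := (isCompact_closedBall x r).finite_cover_balls one_pos
  refine (ht.biUnion fun y _ ↦ h y).subset ?_
  rw [← inter_iUnion₂]
  exact inter_subset_inter_right A (ball_subset_closedBall.trans hcover)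

theorem boundedDensity_iff_encard_le :
    BoundedDensity A ↔ ∃ N : ℕ, ∀ x, (A ∩ ball x 1).encard ≤ N := by
  simp only [encard_le_coe_iff_finite_ncard_le]
  constructor
  · rintro ⟨hfin, N, hN⟩
    exact ⟨N, fun x ↦ ⟨hfin x 1, hN x⟩⟩
  · rintro ⟨N, hN⟩
    exact ⟨.of_finite_inter_ball_one fun x ↦ (hN x).1, N, fun x ↦ (hN x).2⟩

theorem BoundedDensity.mono (hB : BoundedDensity B) (h : A ⊆ B) : BoundedDensity A := by
  rw [boundedDensity_iff_encard_le] at *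
  obtain ⟨N, hN⟩ := hB
  exact ⟨N, fun x ↦ (encard_le_encard (inter_subset_inter_left _ h)).trans (hN x)⟩

theorem boundedDensity_empty : BoundedDensity (∅ : Set (Rd d)) :=
  boundedDensity_iff_encard_le.2 ⟨0, by simp⟩

theorem BoundedDensity.union (hA : BoundedDensity A) (hB : BoundedDensity B) :
    BoundedDensity (A ∪ B) := by
  rw [boundedDensity_iff_encard_le] at *
  obtain ⟨M, hM⟩ := hA
  obtain ⟨N, hN⟩ := hB
  refine ⟨M + N, fun x ↦ ?_⟩
  calc ((A ∪ B) ∩ ball x 1).encard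
      = (A ∩ ball x 1 ∪ B ∩ ball x 1).encard := by rw [union_inter_distrib_right]
    _ ≤ (A ∩ ball x 1).encard + (B ∩ ball x 1).encard := encard_union_le _ _
    _ ≤ (M + N : ℕ) := by push_cast; exact add_le_add (hM x) (hN x)

theorem BoundedDensity.biUnion_finset {ι : Type*} (I : Finset ι) {A : ι → Set (Rd d)}
    (h : ∀ i ∈ I, BoundedDensity (A i)) : BoundedDensity (⋃ i ∈ I, A i) := by
  classical
  induction I using Finset.induction_on with
  | empty => simpa using boundedDensity_empty
  | insert a s _ ih =>
    rw [Finset.set_biUnion_insert]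
    exact (h a (s.mem_insert_self a)).union (ih fun i hi ↦ h i (Finset.mem_insert_of_mem hi))

theorem encard_le_of_forall_finset_card_le {α : Type*} {s : Set α} {N : ℕ}
    (h : ∀ S : Finset α, ↑S ⊆ s → S.card ≤ N) : s.encard ≤ N := by
  by_contra! hlt
  obtain ⟨T, hTs, hT⟩ := exists_subset_encard_eq (Order.add_one_le_of_lt hlt)
  lift T to Finset α using finite_of_encard_eq_coe (k := N + 1) (by simpa using hT)
  rw [encard_coe_eq_coe_finsetCard] at hT
  have hcard : T.card = N + 1 := by exact_mod_cast hT
  exact absurd (h T hTs) (by lia)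

theorem BoundedDensity.of_forall_finset_exists_translate (hA : BoundedDensity A)
    (hAB : ∀ (S : Finset (Rd d)) (U : Rd d → Set (Rd d)), ↑S ⊆ B → (∀ p ∈ S, U p ∈ 𝓝 p) →
      ∃ t, ∀ p ∈ S, ∃ q ∈ A, q - t ∈ U p) :
    BoundedDensity B := by
  rw [boundedDensity_iff_encard_le] at *
  obtain ⟨N, hN⟩ := hA
  refine ⟨N, fun x ↦ encard_le_of_forall_finset_card_le fun S hS ↦ ?_⟩
  obtain ⟨U, hU, hdisj⟩ := S.finite_toSet.t2_separation
  obtain ⟨t, ht⟩ := hAB S (fun p ↦ U p ∩ ball x 1) (hS.trans inter_subset_left) fun p hp ↦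
    inter_mem ((hU p).2.mem_nhds (hU p).1) (isOpen_ball.mem_nhds (hS hp).2)
  choose! q hqA hqU using ht
  have hinj : InjOn q S := fun p hp p' hp' heq ↦ by
    by_contra hne
    exact disjoint_left.1 (hdisj hp hp' hne) (hqU p hp).1 (heq ▸ (hqU p' hp').1)
  have hmaps : q '' S ⊆ A ∩ ball (x + t) 1 := by
    rintro _ ⟨p, hp, rfl⟩
    refine ⟨hqA p hp, ?_⟩
    simpa [dist_eq_norm, sub_sub, add_comm] using (hqU p hp).2
  have hcard := (encard_le_encard hmaps).trans (hN (x + t))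
  rw [hinj.encard_image, encard_coe_eq_coe_finsetCard] at hcard
  exact_mod_cast hcard

end BoundedDensity

/-! ### Common near-periods of almost periodic functions -/

section AlmostPeriodic

variable {d : ℕ}

-- The colour of `s` is the centre of a small ball containing `s - τ`, for an almost period `τ`
-- of `F` within bounded distance of `s`.
theorem APFunction.exists_finite_coloring {F : Rd d → ℂ} (hF : APFunction F) {ε : ℝ} (hε : 0 < ε) :
    ∃ c : Rd d → Rd d, (range c).Finite ∧ ∀ s t, c s = c t → dist (F (s - t)) (F 0) < ε := by
  obtain ⟨δ, hδ, hFδ⟩ :=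
    Metric.continuousAt_iff.1 (hF.1.continuousAt (x := 0)) (ε / 3) (by positivity)
  obtain ⟨R, -, hR⟩ := hF.2 (ε / 3) (by positivity)
  choose τ hτ hτR using hR
  obtain ⟨Z, -, hZ, hcover⟩ := (isCompact_closedBall (0 : Rd d) R).finite_cover_balls (half_pos hδ)
  have hrem : ∀ s, ∃ z ∈ Z, s - τ s ∈ ball z (δ / 2) := fun s ↦ by
    simpa using hcover (show s - τ s ∈ closedBall 0 R by simpa [dist_eq_norm] using hτR s)
  choose c hcZ hc using hrem
  refine ⟨c, hZ.subset (range_subset_iff.2 hcZ), fun s t hst ↦ ?_⟩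
  have hclose : dist ((s - τ s) - (t - τ t)) 0 < δ := by
    rw [dist_zero_right, ← dist_eq_norm]
    linarith [dist_triangle_right (s - τ s) (t - τ t) (c s), mem_ball.1 (hc s),
      mem_ball.1 (hst ▸ hc t)]
  have hs : dist (F (s - t)) (F (s - t - τ s)) < ε / 3 := by
    simpa [dist_eq_norm] using hτ s (s - t - τ s)
  have ht : dist (F ((s - τ s) - (t - τ t))) (F (s - t - τ s)) < ε / 3 := by
    have heq : (s - τ s) - (t - τ t) = s - t - τ s + τ t := by abel
    simpa [dist_eq_norm, heq] using hτ t (s - t - τ s)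
  calc dist (F (s - t)) (F 0)
      ≤ dist (F (s - t)) (F (s - t - τ s)) + dist (F (s - t - τ s)) (F ((s - τ s) - (t - τ t)))
        + dist (F ((s - τ s) - (t - τ t))) (F 0) := dist_triangle4 _ _ _ _
    _ < ε := by rw [dist_comm (F (s - t - τ s))]; linarith [hFδ hclose]

-- Pigeonhole: two of the points `(n * |M|) • w`, `n : ℕ`, have the same colour for every member.
theorem frequently_dist_smul_lt_of_apFunction {ι : Type*} [Finite ι] {F : ι → Rd d → ℂ}
    (hF : ∀ i, APFunction (F i)) (w : Rd d) {ε : ℝ} (hε : 0 < ε) :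
    ∃ᶠ r : ℝ in atTop, ∀ i, dist (F i (r • w)) (F i 0) < ε := by
  refine frequently_atTop.2 fun M ↦ ?_
  choose color hfin hcolor using fun i ↦ (hF i).exists_finite_coloring hε
  let colors (n : ℕ) (i : ι) : Rd d := color i ((n * |M|) • w)
  have hcolors : ∀ n, colors n ∈ {c | ∀ i, c i ∈ range (color i)} := fun n i ↦ mem_range_self _
  obtain ⟨m, n, hmn, heq⟩ := (Set.Finite.pi' hfin).exists_lt_map_eq_of_forall_mem hcolors
  refine ⟨(n - m) * |M|, ?_, fun i ↦ ?_⟩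
  · have hone : (1 : ℝ) ≤ n - m := by
      rw [le_sub_iff_add_le']
      exact_mod_cast hmn
    exact (le_abs_self M).trans (le_mul_of_one_le_left (abs_nonneg M) hone)
  · rw [sub_mul, sub_smul]
    exact hcolor i _ _ (congrFun heq i).symm

theorem mapClusterPt_smul_of_apFunction {ι : Type*} [Finite ι] {F : ι → Rd d → ℂ}
    (hF : ∀ i, APFunction (F i)) (w : Rd d) :
    MapClusterPt (fun i ↦ F i 0) atTop (fun (r : ℝ) i ↦ F i (r • w)) := by
  cases nonempty_fintype ι
  refine nhds_basis_ball.mapClusterPt_iff_frequently.2 fun ε hε ↦ ?_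
  simpa only [mem_ball, dist_pi_lt_iff hε] using frequently_dist_smul_lt_of_apFunction hF w hε

end AlmostPeriodic

/-! ### Monomials -/

section Monomials

variable {d : ℕ}

theorem mem_mIdx {K : ℕ} {k : Fin d → ℕ} : k ∈ mIdx d K ↔ ∑ i, k i ≤ K := by
  simp only [mIdx, Finset.mem_filter, Finset.mem_Iic, and_iff_right_iff_imp]
  exact fun h i ↦
    (Finset.single_le_sum (f := k) (fun _ _ ↦ Nat.zero_le _) (Finset.mem_univ i)).trans h

theorem mem_piAntidiag_univ {K : ℕ} {k : Fin d → ℕ} :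
    k ∈ Finset.univ.piAntidiag K ↔ ∑ i, k i = K := by
  simp

theorem filter_mIdx_sum_eq (K : ℕ) :
    (mIdx d K).filter (fun k ↦ ∑ i, k i = K) = Finset.univ.piAntidiag K := by
  ext k
  rw [Finset.mem_filter, mem_mIdx, mem_piAntidiag_univ]
  lia

theorem sum_mIdx_succ {M : Type*} [AddCommMonoid M] (K : ℕ) (g : (Fin d → ℕ) → M) :
    ∑ k ∈ mIdx d (K + 1), g k =
      ∑ k ∈ mIdx d K, g k + ∑ k ∈ Finset.univ.piAntidiag (K + 1), g k := by
  have hlow : (mIdx d (K + 1)).filter (fun k ↦ ¬ ∑ i, k i = K + 1) = mIdx d K := by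
    ext k
    simp only [Finset.mem_filter, mem_mIdx]
    lia
  rw [← Finset.sum_filter_add_sum_filter_not _ (fun k ↦ ∑ i, k i = K + 1), hlow,
    filter_mIdx_sum_eq, add_comm]

theorem monom_eq_prod (k : Fin d → ℕ) (x : Rd d) : monom k x = ∏ i, (x i : ℂ) ^ k i := by
  simp [monom]

theorem monom_zero_left (x : Rd d) : monom 0 x = 1 := by
  simp [monom]

theorem monom_smul (k : Fin d → ℕ) (r : ℝ) (x : Rd d) :
    monom k (r • x) = (r : ℂ) ^ (∑ i, k i) * monom k x := by
  simp [monom, mul_pow, Finset.prod_mul_distrib, Finset.prod_pow_eq_pow_sum]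

theorem monom_add (k : Fin d → ℕ) (x y : Rd d) :
    monom k (x + y) =
      ∑ m ∈ Finset.Iic k, (∏ i, (k i).choose (m i) : ℕ) * monom m x * monom (k - m) y := by
  have hbox : Finset.Iic k = Fintype.piFinset fun i ↦ Finset.range (k i + 1) := by
    ext m
    simp [Pi.le_def]
  simp only [monom_eq_prod, PiLp.add_apply, Complex.ofReal_add, add_pow, Finset.prod_univ_sum, hbox,
    Nat.cast_prod, Pi.sub_apply, ← Finset.prod_mul_distrib]
  exact Finset.sum_congr rfl fun m _ ↦ Finset.prod_congr rfl fun i _ ↦ by ring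

theorem hasTemperateGrowth_monom (k : Fin d → ℕ) :
    Function.HasTemperateGrowth (monom k : Rd d → ℂ) := by
  have hcoord (i : Fin d) : Function.HasTemperateGrowth fun x : Rd d ↦ (x i : ℂ) :=
    (Complex.ofRealCLM.comp (EuclideanSpace.proj i : Rd d →L[ℝ] ℝ)).hasTemperateGrowth
  have hprod (s : Finset (Fin d)) :
      Function.HasTemperateGrowth fun x : Rd d ↦ ∏ i ∈ s, (x i : ℂ) ^ k i := by
    classical
    induction s using Finset.induction_on with
    | empty => exact .const 1
    | insert a s ha ih =>
      simp only [Finset.prod_insert ha]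
      exact ((hcoord a).pow (k a)).mul ih
  simpa only [← monom_eq_prod] using hprod Finset.univ

theorem exists_mem_pi_forall_eval_ne_zero {R σ ι : Type*} [CommRing R] [IsDomain R] [Finite ι]
    {T : σ → Set R} (hT : ∀ j, (T j).Infinite) {P : ι → MvPolynomial σ R} (hP : ∀ i, P i ≠ 0) :
    ∃ x ∈ Set.pi univ T, ∀ i, MvPolynomial.eval x (P i) ≠ 0 := by
  cases nonempty_fintype ι
  have hprod : ∏ i, P i ≠ 0 := Finset.prod_ne_zero_iff.2 fun i _ ↦ hP i
  contrapose! hprod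
  refine MvPolynomial.funext_set T hT fun x hx ↦ ?_
  obtain ⟨i, hi⟩ := hprod x hx
  rw [map_prod, map_zero, Finset.prod_eq_zero (Finset.mem_univ i) hi]

theorem exists_forall_sum_monom_mul_ne_zero {ι : Type*} [Finite ι] (I : Finset (Fin d → ℕ))
    {c : ι → (Fin d → ℕ) → ℂ} (hc : ∀ i, ∃ k ∈ I, c i k ≠ 0) :
    ∃ w : Rd d, ∀ i, ∑ k ∈ I, monom k w * c i k ≠ 0 := by
  let P (i : ι) : MvPolynomial (Fin d) ℂ :=
    ∑ k ∈ I, MvPolynomial.monomial (Finsupp.equivFunOnFinite.symm k) (c i k)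
  have hP : ∀ i, P i ≠ 0 := fun i hzero ↦ by
    obtain ⟨k, hk, hne⟩ := hc i
    have hcoeff := congrArg (MvPolynomial.coeff (Finsupp.equivFunOnFinite.symm k)) hzero
    simp only [P, MvPolynomial.coeff_sum, MvPolynomial.coeff_monomial, MvPolynomial.coeff_zero,
      EmbeddingLike.apply_eq_iff_eq, Finset.sum_ite_eq', hk, if_true] at hcoeff
    exact hne hcoeff
  obtain ⟨x, hx, hne⟩ := exists_mem_pi_forall_eval_ne_zero
    (fun _ : Fin d ↦ infinite_range_of_injective Complex.ofReal_injective) hP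
  choose w hw using fun i ↦ hx i (mem_univ i)
  refine ⟨WithLp.toLp 2 w, fun i ↦ ?_⟩
  convert hne i using 1
  simp only [P, map_sum, MvPolynomial.eval_monomial, monom_eq_prod, hw]
  refine Finset.sum_congr rfl fun k _ ↦ ?_
  rw [Finsupp.prod_fintype _ _ (by simp), mul_comm]
  simp

theorem tendsto_ofReal_pow_div_pow_atTop {e K : ℕ} (he : e ≤ K) :
    Tendsto (fun r : ℝ ↦ (r : ℂ) ^ e / (r : ℂ) ^ K) atTop (𝓝 (if e = K then 1 else 0)) := by
  rcases he.eq_or_lt with rfl | hlt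
  · refine tendsto_const_nhds.congr' ?_
    filter_upwards [eventually_ne_atTop 0] with r hr
    rw [if_pos rfl, div_self (pow_ne_zero e (Complex.ofReal_ne_zero.2 hr))]
  · rw [if_neg hlt.ne]
    simpa [Function.comp_def] using
      (Complex.continuous_ofReal.tendsto 0).comp (tendsto_pow_div_pow_atTop_zero hlt)

end Monomials

/-! ### Supports of tempered distributions -/

section Support

theorem exists_sum_eq_of_tsupport_subset_iUnion {E F ι : Type*} [NormedAddCommGroup E]
    [NormedSpace ℝ E] [FiniteDimensional ℝ E] [NormedAddCommGroup F] [NormedSpace ℝ F] [Fintype ι]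
    {U : ι → Set E} (hU : ∀ i, IsOpen (U i)) {φ : SchwartzMap E F} (hφ : HasCompactSupport φ)
    (hφU : tsupport φ ⊆ ⋃ i, U i) :
    ∃ ψ : ι → SchwartzMap E F,
      φ = ∑ i, ψ i ∧ ∀ i, HasCompactSupport (ψ i) ∧ tsupport (ψ i) ⊆ U i := by
  obtain ⟨ρ, hρ⟩ := SmoothPartitionOfUnity.exists_isSubordinate 𝓘(ℝ, E)
    (isClosed_tsupport φ) U hU hφU
  have hcompact (i : ι) : HasCompactSupport fun x ↦ ρ i x • φ x := hφ.smul_left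
  have hsmooth (i : ι) : ContDiff ℝ ∞ fun x ↦ ρ i x • φ x :=
    (ρ i).contMDiff.contDiff.smul (φ.smooth _)
  refine ⟨fun i ↦ (hcompact i).toSchwartzMap (hsmooth i), ?_, fun i ↦
    ⟨hcompact i, (tsupport_smul_subset_left (ρ i) φ).trans (hρ i)⟩⟩
  ext x
  simp only [sum_apply, HasCompactSupport.toSchwartzMap_toFun, ← Finset.sum_smul]
  by_cases hx : x ∈ tsupport φ
  · rw [← finsum_eq_sum_of_fintype, ρ.sum_eq_one hx, one_smul]
  · rw [image_eq_zero_of_notMem_tsupport hx, smul_zero]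

variable {d : ℕ}

/-- The distribution `f` vanishes on `U`: it annihilates every test function (smooth with compact
support) supported in `U`. The support of `f` is the set of points without a neighbourhood on which
`f` vanishes. -/
def VanishesOn (f : TemperedDist d) (U : Set (Rd d)) : Prop :=
  ∀ φ : SchwartzMap (Rd d) ℂ, HasCompactSupport φ → tsupport φ ⊆ U → f φ = 0

theorem VanishesOn.mono {f : TemperedDist d} ⦃U V : Set (Rd d)⦄ (hUV : U ⊆ V)
    (hV : VanishesOn f V) : VanishesOn f U :=
  fun φ hφ hφU ↦ hV φ hφ (hφU.trans hUV)

theorem notMem_tdSupport_iff {f : TemperedDist d} {x : Rd d} :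
    x ∉ tdSupport f ↔ ∀ᶠ U in (𝓝 x).smallSets, VanishesOn f U := by
  rw [(nhds_basis_opens x).eventually_smallSets VanishesOn.mono]
  simp only [tdSupport, VanishesOn, mem_ofPred_eq, not_forall, not_exists, not_and, not_not,
    exists_prop, and_left_comm, and_assoc]

theorem exists_mem_tdSupport_of_apply_ne_zero {f : TemperedDist d} {φ : SchwartzMap (Rd d) ℂ}
    (hφ : HasCompactSupport φ) (hne : f φ ≠ 0) : ∃ x ∈ tdSupport f, x ∈ tsupport φ := by
  contrapose! hne
  have hlocal : ∀ x ∈ tsupport φ, ∃ U, (x ∈ U ∧ IsOpen U) ∧ VanishesOn f U := fun x hx ↦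
    ((nhds_basis_opens x).eventually_smallSets VanishesOn.mono).1
      (notMem_tdSupport_iff.1 fun h ↦ hne x h hx)
  choose! U hU hvanish using hlocal
  obtain ⟨t, ht, hcover⟩ := hφ.isCompact.elim_nhds_subcover U
    fun x hx ↦ (hU x hx).2.mem_nhds (hU x hx).1
  obtain ⟨ψ, hsum, hψ⟩ := exists_sum_eq_of_tsupport_subset_iUnion (U := fun x : t ↦ U x)
    (fun x ↦ (hU x (ht x x.2)).2) hφ (by simpa [iUnion_subtype] using hcover)
  rw [hsum, map_sum]
  exact Finset.sum_eq_zero fun x _ ↦ hvanish x (ht x x.2) (ψ x) (hψ x).1 (hψ x).2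

theorem tdSupport_sub_subset (f g : TemperedDist d) :
    tdSupport (f - g) ⊆ tdSupport f ∪ tdSupport g := by
  intro x
  contrapose
  simp only [mem_union, not_or, notMem_tdSupport_iff]
  rintro ⟨hf, hg⟩
  filter_upwards [hf, hg] with U hfU hgU φ hφ hφU
  rw [sub_apply, hfU φ hφ hφU, hgU φ hφ hφU, sub_zero]

theorem tdSupport_sum_subset {ι : Type*} (I : Finset ι) (g : ι → TemperedDist d) :
    tdSupport (∑ i ∈ I, g i) ⊆ ⋃ i ∈ I, tdSupport (g i) := by
  intro x
  contrapose
  simp only [mem_iUnion₂, not_exists, notMem_tdSupport_iff, ← eventually_all_finset]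
  intro hg
  filter_upwards [hg] with U hgU φ hφ hφU
  rw [sum_apply]
  exact Finset.sum_eq_zero fun i hi ↦ hgU i hi φ hφ hφU

theorem hasCompactSupport_smulLeftCLM (u : Rd d → ℂ) {φ : SchwartzMap (Rd d) ℂ}
    (hφ : HasCompactSupport φ) : HasCompactSupport (smulLeftCLM ℂ u φ) :=
  hφ.isCompact.of_isClosed_subset (isClosed_tsupport _)
    ((tsupport_smulLeftCLM_subset u φ).trans inter_subset_left)

theorem tdSupport_comp_smulLeftCLM_subset (f : TemperedDist d) (u : Rd d → ℂ) :
    tdSupport (f.comp (smulLeftCLM ℂ u)) ⊆ tdSupport f := by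
  intro x
  contrapose
  simp only [notMem_tdSupport_iff]
  intro hf
  filter_upwards [hf] with U hfU φ hφ hφU
  exact hfU _ (hasCompactSupport_smulLeftCLM u hφ)
    ((tsupport_smulLeftCLM_subset u φ).trans (inter_subset_left.trans hφU))

end Support

/-! ### Translates of test functions -/

section Translate

variable {d : ℕ}

theorem hasCompactSupport_compSubConstCLM (t : Rd d) {φ : SchwartzMap (Rd d) ℂ}
    (hφ : HasCompactSupport φ) : HasCompactSupport (compSubConstCLM ℂ t φ) :=
  hφ.comp_homeomorph (Homeomorph.subRight t)

theorem sub_mem_tsupport_of_mem_tsupport_compSubConstCLM {t x : Rd d} {φ : SchwartzMap (Rd d) ℂ}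
    (hx : x ∈ tsupport (compSubConstCLM ℂ t φ)) : x - t ∈ tsupport φ :=
  tsupport_comp_subset_preimage φ (continuous_sub_right t) hx

theorem APDistribution.apFunction_compSubConstCLM {f : TemperedDist d} (hf : APDistribution f)
    {φ : SchwartzMap (Rd d) ℂ} (hφ : HasCompactSupport φ) :
    APFunction fun t ↦ f (compSubConstCLM ℂ t φ) :=
  hf (fun z ↦ φ (-z)) ((φ.smooth _).comp contDiff_neg) (hφ.comp_homeomorph (.neg (Rd d)))
    (fun t ↦ compSubConstCLM ℂ t φ) fun t y ↦ by rw [compSubConstCLM_apply, neg_sub]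

theorem smulLeftCLM_monom_apply (k : Fin d → ℕ) (φ : SchwartzMap (Rd d) ℂ) (x : Rd d) :
    smulLeftCLM ℂ (monom k) φ x = monom k x * φ x := by
  rw [smulLeftCLM_apply_apply (hasTemperateGrowth_monom k), smul_eq_mul]

theorem smulLeftCLM_monom_zero (φ : SchwartzMap (Rd d) ℂ) : smulLeftCLM ℂ (monom 0) φ = φ := by
  ext x
  rw [smulLeftCLM_monom_apply, monom_zero_left, one_mul]

theorem smulLeftCLM_monom_compSubConstCLM (k : Fin d → ℕ) (t : Rd d) (φ : SchwartzMap (Rd d) ℂ) :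
    smulLeftCLM ℂ (monom k) (compSubConstCLM ℂ t φ) =
      ∑ m ∈ Finset.Iic k, ((∏ i, (k i).choose (m i) : ℕ) * monom (k - m) t) •
        compSubConstCLM ℂ t (smulLeftCLM ℂ (monom m) φ) := by
  ext x
  simp only [sum_apply, smul_apply, smul_eq_mul, smulLeftCLM_monom_apply, compSubConstCLM_apply]
  rw [← sub_add_cancel x t, monom_add, Finset.sum_mul, sub_add_cancel]
  exact Finset.sum_congr rfl fun m _ ↦ by ring

-- Only the term `m = 0` of the binomial expansion can have the full order of growth `r ^ K`.
theorem tendsto_apply_smulLeftCLM_monom_translate_div_pow {g : TemperedDist d}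
    {φ : SchwartzMap (Rd d) ℂ} {k : Fin d → ℕ} {K : ℕ} (hk : ∑ i, k i ≤ K) {w : Rd d}
    {l : Filter ℝ} (hl : l ≤ atTop)
    (hlim : ∀ m ≤ k, Tendsto (fun r ↦ g (compSubConstCLM ℂ (r • w) (smulLeftCLM ℂ (monom m) φ))) l
      (𝓝 (g (smulLeftCLM ℂ (monom m) φ)))) :
    Tendsto
      (fun r : ℝ ↦ g (smulLeftCLM ℂ (monom k) (compSubConstCLM ℂ (r • w) φ)) / (r : ℂ) ^ K) l
      (𝓝 (if ∑ i, k i = K then monom k w * g φ else 0)) := by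
  let coeff (m : Fin d → ℕ) : ℂ := (∏ i, (k i).choose (m i) : ℕ) * monom (k - m) w
  have hexpand (r : ℝ) : g (smulLeftCLM ℂ (monom k) (compSubConstCLM ℂ (r • w) φ)) / (r : ℂ) ^ K =
      ∑ m ∈ Finset.Iic k, coeff m * ((r : ℂ) ^ (∑ i, (k - m) i) / (r : ℂ) ^ K) *
        g (compSubConstCLM ℂ (r • w) (smulLeftCLM ℂ (monom m) φ)) := by
    simp only [smulLeftCLM_monom_compSubConstCLM, map_sum, map_smul, smul_eq_mul, monom_smul,
      Finset.sum_div, coeff]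
    exact Finset.sum_congr rfl fun m _ ↦ by ring
  have hdeg {m : Fin d → ℕ} (hm : m ≤ k) : ∑ i, (k - m) i + ∑ i, m i = ∑ i, k i := by
    rw [← Finset.sum_add_distrib]
    exact Finset.sum_congr rfl fun i _ ↦ Nat.sub_add_cancel (hm i)
  have hlead : (if ∑ i, k i = K then monom k w * g φ else 0) =
      ∑ m ∈ Finset.Iic k, coeff m * (if ∑ i, (k - m) i = K then 1 else 0) *
        g (smulLeftCLM ℂ (monom m) φ) := by
    rw [Finset.sum_eq_single_of_mem 0 (Finset.mem_Iic.2 zero_le) fun m hm hm0 ↦ ?_]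
    · simp [coeff, smulLeftCLM_monom_zero]
    · have hpos : ∑ i, m i ≠ 0 := by simpa [funext_iff] using hm0
      rw [if_neg (by have := hdeg (Finset.mem_Iic.1 hm); lia), mul_zero, zero_mul]
  simp only [hexpand, hlead]
  refine tendsto_finsetSum _ fun m hm ↦ ?_
  have hm := Finset.mem_Iic.1 hm
  have hle : ∑ i, (k - m) i ≤ K := ((Nat.le_add_right _ _).trans_eq (hdeg hm)).trans hk
  have hratio := (tendsto_ofReal_pow_div_pow_atTop hle).mono_left hl
  exact (hratio.const_mul (coeff m)).mul (hlim m hm)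

end Translate

/-! ### Combinations of almost periodic distributions with monomial coefficients -/

section MonomialCombination

variable {d K : ℕ} {g : (Fin d → ℕ) → TemperedDist d}

/-- The distribution `∑_{k ∈ I} x^k g_k`, where `(x^k g_k)(φ) = g_k(x^k φ)`. -/
def monomialCombination (I : Finset (Fin d → ℕ)) (g : (Fin d → ℕ) → TemperedDist d) :
    TemperedDist d :=
  ∑ k ∈ I, (g k).comp (smulLeftCLM ℂ (monom k))

theorem monomialCombination_apply (I : Finset (Fin d → ℕ)) (g : (Fin d → ℕ) → TemperedDist d)
    (φ : SchwartzMap (Rd d) ℂ) :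
    monomialCombination I g φ = ∑ k ∈ I, g k (smulLeftCLM ℂ (monom k) φ) := by
  simp only [monomialCombination, sum_apply, ContinuousLinearMap.comp_apply]

theorem tdSupport_monomialCombination_subset (I : Finset (Fin d → ℕ))
    (g : (Fin d → ℕ) → TemperedDist d) :
    tdSupport (monomialCombination I g) ⊆ ⋃ k ∈ I, tdSupport (g k) :=
  (tdSupport_sum_subset _ _).trans
    (iUnion₂_mono fun k _ ↦ tdSupport_comp_smulLeftCLM_subset (g k) (monom k))

theorem tendsto_monomialCombination_translate_div_pow {φ : SchwartzMap (Rd d) ℂ} {w : Rd d}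
    {l : Filter ℝ} (hl : l ≤ atTop)
    (hlim : ∀ k ∈ mIdx d K, ∀ m ≤ k,
      Tendsto (fun r ↦ g k (compSubConstCLM ℂ (r • w) (smulLeftCLM ℂ (monom m) φ))) l
        (𝓝 (g k (smulLeftCLM ℂ (monom m) φ)))) :
    Tendsto
      (fun r : ℝ ↦
        monomialCombination (mIdx d K) g (compSubConstCLM ℂ (r • w) φ) / (r : ℂ) ^ K) l
      (𝓝 (∑ k ∈ Finset.univ.piAntidiag K, monom k w * g k φ)) := by
  simp only [monomialCombination_apply, Finset.sum_div, ← filter_mIdx_sum_eq, Finset.sum_filter]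
  exact tendsto_finsetSum _ fun k hk ↦
    tendsto_apply_smulLeftCLM_monom_translate_div_pow (mem_mIdx.1 hk) hl (hlim k hk)

theorem exists_forall_monomialCombination_translate_ne_zero {ι : Type*} [Finite ι]
    (hg : ∀ k ∈ mIdx d K, APDistribution (g k)) {φ : ι → SchwartzMap (Rd d) ℂ}
    (hφ : ∀ i, HasCompactSupport (φ i))
    (hne : ∀ i, ∃ k ∈ Finset.univ.piAntidiag K, g k (φ i) ≠ 0) :
    ∃ t, ∀ i, monomialCombination (mIdx d K) g (compSubConstCLM ℂ t (φ i)) ≠ 0 := by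
  obtain ⟨w, hw⟩ := exists_forall_sum_monom_mul_ne_zero _ hne
  let F (a : ι × Σ k : mIdx d K, Finset.Iic k.1) (t : Rd d) : ℂ :=
    g a.2.1 (compSubConstCLM ℂ t (smulLeftCLM ℂ (monom a.2.2) (φ a.1)))
  have hF : ∀ a, APFunction (F a) := fun a ↦
    (hg a.2.1 a.2.1.2).apFunction_compSubConstCLM (hasCompactSupport_smulLeftCLM _ (hφ a.1))
  obtain ⟨l, hl, hlimF⟩ := mapClusterPt_iff_ultrafilter.1 (mapClusterPt_smul_of_apFunction hF w)
  have hlim (i : ι) : ∀ k ∈ mIdx d K, ∀ m ≤ k,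
      Tendsto (fun r : ℝ ↦ g k (compSubConstCLM ℂ (r • w) (smulLeftCLM ℂ (monom m) (φ i)))) l
        (𝓝 (g k (smulLeftCLM ℂ (monom m) (φ i)))) := fun k hk m hm ↦ by
    simpa only [F, compSubConstCLM_zero, ContinuousLinearMap.id_apply] using
      tendsto_pi_nhds.1 hlimF (i, ⟨⟨k, hk⟩, ⟨m, Finset.mem_Iic.2 hm⟩⟩)
  have hev : ∀ᶠ r : ℝ in l, ∀ i,
      monomialCombination (mIdx d K) g (compSubConstCLM ℂ (r • w) (φ i)) ≠ 0 :=
    eventually_all.2 fun i ↦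
      ((tendsto_monomialCombination_translate_div_pow hl (hlim i)).eventually_ne (hw i)).mono
        fun _ hr ↦ (div_ne_zero_iff.1 hr).1
  exact hev.exists.imp' (· • w) fun _ hr ↦ hr

theorem boundedDensity_tdSupport_of_sum_eq (hg : ∀ k ∈ mIdx d K, APDistribution (g k))
    (hBD : BoundedDensity (tdSupport (monomialCombination (mIdx d K) g))) {k : Fin d → ℕ}
    (hk : ∑ i, k i = K) : BoundedDensity (tdSupport (g k)) := by
  refine hBD.of_forall_finset_exists_translate fun S U hS hU ↦ ?_
  have htest (p : S) : ∃ φ : SchwartzMap (Rd d) ℂ,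
      HasCompactSupport φ ∧ tsupport φ ⊆ interior (U p) ∧ g k φ ≠ 0 :=
    hS p.2 _ isOpen_interior (mem_interior_iff_mem_nhds.2 (hU p p.2))
  choose φ hφ hφU hne using htest
  obtain ⟨t, ht⟩ := exists_forall_monomialCombination_translate_ne_zero hg hφ
    fun p ↦ ⟨k, mem_piAntidiag_univ.2 hk, hne p⟩
  refine ⟨t, fun p hp ↦ ?_⟩
  obtain ⟨q, hq, hqφ⟩ := exists_mem_tdSupport_of_apply_ne_zero
    (hasCompactSupport_compSubConstCLM t (hφ ⟨p, hp⟩)) (ht ⟨p, hp⟩)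
  have hqt : q - t ∈ tsupport (φ ⟨p, hp⟩) := sub_mem_tsupport_of_mem_tsupport_compSubConstCLM hqφ
  exact ⟨q, hq, interior_subset (hφU ⟨p, hp⟩ hqt)⟩

theorem boundedDensity_tdSupport_monomialCombination_of_succ
    (htop : ∀ k ∈ Finset.univ.piAntidiag (K + 1), BoundedDensity (tdSupport (g k)))
    (hBD : BoundedDensity (tdSupport (monomialCombination (mIdx d (K + 1)) g))) :
    BoundedDensity (tdSupport (monomialCombination (mIdx d K) g)) := by
  have hsub : monomialCombination (mIdx d K) g = monomialCombination (mIdx d (K + 1)) g -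
      monomialCombination (Finset.univ.piAntidiag (K + 1)) g := by
    simp only [monomialCombination, sum_mIdx_succ, add_sub_cancel_right]
  rw [hsub]
  exact (hBD.union (.biUnion_finset _ htop)).mono <| (tdSupport_sub_subset _ _).trans <|
    union_subset_union_right _ (tdSupport_monomialCombination_subset _ g)

theorem boundedDensity_tdSupport_of_monomialCombination
    (hg : ∀ k ∈ mIdx d K, APDistribution (g k))
    (hBD : BoundedDensity (tdSupport (monomialCombination (mIdx d K) g))) :
    ∀ k ∈ mIdx d K, BoundedDensity (tdSupport (g k)) := by
  induction K with
  | zero =>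
    exact fun k hk ↦ boundedDensity_tdSupport_of_sum_eq hg hBD (Nat.le_zero.1 (mem_mIdx.1 hk))
  | succ K ih =>
    have hlow : BoundedDensity (tdSupport (monomialCombination (mIdx d K) g)) :=
      boundedDensity_tdSupport_monomialCombination_of_succ
        (fun k hk ↦ boundedDensity_tdSupport_of_sum_eq hg hBD (mem_piAntidiag_univ.1 hk)) hBD
    intro k hk
    rcases (mem_mIdx.1 hk).eq_or_lt with hdeg | hdeg
    · exact boundedDensity_tdSupport_of_sum_eq hg hBD hdeg
    · exact ih (fun m hm ↦ hg m (mem_mIdx.2 ((mem_mIdx.1 hm).trans K.le_succ))) hlow k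
        (mem_mIdx.2 (Nat.lt_succ_iff.1 hdeg))

end MonomialCombination

end

/-- (Proposition 4.) Let `f_k`, `‖k‖ ≤ K`, be almost periodic
tempered distributions on `ℝ^d` and let `f = Σ_{‖k‖≤K} x^k f_k` (where
`(x^k f_k)(φ) = f_k(x^k φ)`). If `supp f` has bounded density, then every
`supp f_k` has bounded density. -/
theorem statement12 {d K : ℕ} (fk : (Fin d → ℕ) → TemperedDist d)
    (f : TemperedDist d)
    (hap : ∀ k ∈ mIdx d K, APDistribution (fk k))
    (hsum : ∀ (φ : SchwartzMap (Rd d) ℂ) (Ψ : (Fin d → ℕ) → SchwartzMap (Rd d) ℂ),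
      (∀ k ∈ mIdx d K, ∀ x : Rd d, Ψ k x = monom k x * φ x) →
      f φ = ∑ k ∈ mIdx d K, fk k (Ψ k))
    (hBD : BoundedDensity (tdSupport f)) :
    ∀ k ∈ mIdx d K, BoundedDensity (tdSupport (fk k)) := by
  have hf : f = monomialCombination (mIdx d K) fk := by
    ext φ
    rw [monomialCombination_apply]
    exact hsum φ _ fun k _ x ↦ smulLeftCLM_monom_apply k φ x
  exact boundedDensity_tdSupport_of_monomialCombination hap (hf ▸ hBD)
end
end

section
/- Let g_0, g_1, …, g_N be tempered distributions on ℝ^d such that for every C^∞ function φ with compact support and every n = 0, …, N, the function t = (t_1,…,t_d) ↦ g_n(φ(t − ·)) is almost periodic in t_1 ∈ ℝ for every fixed (t_2,…,t_d) ∈ ℝ^{d−1}. If the tempered distribution F = Σ_{n=0}^N y_1^n g_n (where y_1^n g_n denotes the tempered distribution φ ↦ g_n(y_1^n φ)) has support of bounded density, then the union ∪_{n=0}^N supp g_n has bounded density. -/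
open MeasureTheory SchwartzMap Metric Set
open scoped Pointwise RealInnerProductSpace ENNReal NNReal

noncomputable section

/-- Relative density of a set in `ℝ`. -/
def RelDenseR (A : Set ℝ) : Prop :=
  ∃ R : ℝ, 0 < R ∧ ∀ s : ℝ, ∃ a ∈ A, dist s a ≤ R

/-- A continuous function on `ℝ` is almost periodic if for every `ε > 0` its
set of `ε`-almost periods is relatively dense. -/
def APFunctionR (g : ℝ → ℂ) : Prop :=
  Continuous g ∧ ∀ ε > (0:ℝ), RelDenseR {τ : ℝ | ∀ t, ‖g (t + τ) - g t‖ < ε}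

/-!
Translating a test function `φ` by `s` in the first coordinate direction `v` and expanding `y₁ ^ n`
around `s` gives `F (φ (· - s • v)) = ∑ k, a k s * s ^ k` with almost periodic coefficients `a k`.
If some `g n` does not vanish near a point, then for a suitable `φ` supported there one of the
numbers `a k 0` is nonzero. Finitely many almost periodic functions are recurrent along a common
filter `s → ∞`, and the identity function is transcendental over the algebra of functions recurrent
along that filter. Hence for finitely many such `φ` the product of the corresponding expressions is
not identically zero: a single translation makes all the values of `F` nonzero. So any finite set of
points of `⋃ n, supp (g n)` in a ball gives as many points of `supp F` in a translate of that ball.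
-/

section AlmostPeriodic

open Filter Topology Polynomial

lemma APFunctionR.uniformContinuous {f : ℝ → ℂ} (hf : APFunctionR f) : UniformContinuous f := by
  obtain ⟨hcont, hperiods⟩ := hf
  rw [Metric.uniformContinuous_iff]
  intro ε hε
  obtain ⟨R, -, hperiods⟩ := hperiods (ε / 3) (by positivity)
  have hcompact : UniformContinuousOn f (Icc (-R - 1) (R + 1)) :=
    isCompact_Icc.uniformContinuousOn_of_continuous hcont.continuousOn
  obtain ⟨δ, hδ, hclose⟩ := Metric.uniformContinuousOn_iff.1 hcompact (ε / 3) (by positivity)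
  refine ⟨min δ 1, by positivity, fun {a b} hab => ?_⟩
  obtain ⟨p, hp, hap⟩ := hperiods (-a)
  obtain ⟨habδ, hab1⟩ := lt_min_iff.1 hab
  rw [Real.dist_eq, abs_le] at hap
  rw [Real.dist_eq, abs_lt] at hab1
  have hmid : dist (f (a + p)) (f (b + p)) < ε / 3 :=
    hclose _ ⟨by linarith, by linarith⟩ _ ⟨by linarith, by linarith⟩ (by simpa using habδ)
  calc dist (f a) (f b)
      ≤ dist (f a) (f (a + p)) + dist (f (a + p)) (f (b + p)) + dist (f (b + p)) (f b) :=
        dist_triangle4 _ _ _ _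
    _ < ε / 3 + ε / 3 + ε / 3 := by
        gcongr
        · rw [dist_comm, dist_eq_norm]; exact hp a
        · rw [dist_eq_norm]; exact hp b
    _ = ε := by ring

/- The colour of `s` records, up to the modulus of uniform continuity of `f`, the bounded remainder
of `s` modulo an almost period. -/
lemma APFunctionR.exists_finite_coloring_translates {f : ℝ → ℂ} (hf : APFunctionR f) {ε : ℝ}
    (hε : 0 < ε) :
    ∃ c : ℝ → ℤ, (range c).Finite ∧
      ∀ s s', c s = c s' → ∀ t, dist (f (t + s)) (f (t + s')) < ε := by
  obtain ⟨δ, hδ, huc⟩ := Metric.uniformContinuous_iff.1 hf.uniformContinuous (ε / 3) (by positivity)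
  obtain ⟨R, -, hperiods⟩ := hf.2 (ε / 3) (by positivity)
  choose p hp hdist using hperiods
  refine ⟨fun s => ⌊(s - p s) / δ⌋, ?_, fun s s' hc t => ?_⟩
  · refine (finite_Icc ⌊-R / δ⌋ ⌊R / δ⌋).subset (range_subset_iff.2 fun s => ?_)
    have hs := abs_le.1 (Real.dist_eq s (p s) ▸ hdist s)
    exact ⟨Int.floor_le_floor (by gcongr; exact hs.1), Int.floor_le_floor (by gcongr; exact hs.2)⟩
  · have hrem : |(s - p s) - (s' - p s')| < δ := by
      have := Int.abs_sub_lt_one_of_floor_eq_floor hc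
      rwa [← sub_div, abs_div, abs_of_pos hδ, div_lt_one hδ] at this
    have hmid : dist (f (t + s - p s)) (f (t + s' - p s')) < ε / 3 :=
      huc (by rwa [Real.dist_eq, add_sub_assoc t s, add_sub_assoc t s', add_sub_add_left_eq_sub])
    have hperiod (r : ℝ) : dist (f (t + r)) (f (t + r - p r)) < ε / 3 := by
      simpa [dist_eq_norm] using hp r (t + r - p r)
    calc dist (f (t + s)) (f (t + s'))
        ≤ dist (f (t + s)) (f (t + s - p s)) + dist (f (t + s - p s)) (f (t + s' - p s')) +
          dist (f (t + s' - p s')) (f (t + s')) := dist_triangle4 _ _ _ _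
      _ < ε / 3 + ε / 3 + ε / 3 := by
          gcongr
          · exact hperiod s
          · rw [dist_comm]; exact hperiod s'
      _ = ε := by ring

lemma exists_ge_forall_dist_translate_lt {ι : Type*} [Finite ι] {f : ι → ℝ → ℂ}
    (hf : ∀ i, APFunctionR (f i)) {ε : ℝ} (hε : 0 < ε) (L : ℝ) :
    ∃ s ≥ L, ∀ i t, dist (f i (t + s)) (f i t) < ε := by
  wlog hL : 0 ≤ L generalizing L
  · obtain ⟨s, hs, h⟩ := this 0 le_rfl
    exact ⟨s, hs.le.trans' (not_le.1 hL).le, h⟩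
  choose c hfin hc using fun i => (hf i).exists_finite_coloring_translates hε
  obtain ⟨m, -, n, -, hmn, hcolor⟩ := infinite_univ.exists_ne_map_eq_of_mapsTo
    (f := fun (m : ℕ) i => c i (m * L)) (t := {k | ∀ i, k i ∈ range (c i)})
    (fun m _ i => mem_range_self _) (Finite.pi' hfin)
  wlog hlt : m < n generalizing m n
  · exact this n m hmn.symm hcolor.symm (hmn.lt_or_gt.resolve_left hlt)
  refine ⟨n * L - m * L, ?_, fun i t => ?_⟩
  · have : (m : ℝ) + 1 ≤ n := mod_cast hlt
    nlinarith
  · convert hc i _ _ (congrFun hcolor i).symm (t - m * L) using 3 <;> ring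

/-- The algebra of functions that are recurrent along the filter `l`: their translates by `s`
converge back to them, pointwise, as `s` runs along `l`. -/
def recurrentSubalgebra (l : Filter ℝ) : Subalgebra ℂ (ℝ → ℂ) where
  carrier := {f | ∀ t, Tendsto (fun s => f (t + s)) l (𝓝 (f t))}
  mul_mem' hf hg t := (hf t).mul (hg t)
  add_mem' hf hg t := (hf t).add (hg t)
  algebraMap_mem' _ _ := tendsto_const_nhds

lemma exists_forall_mem_recurrentSubalgebra {ι : Type*} [Finite ι] {f : ι → ℝ → ℂ}
    (hf : ∀ i, APFunctionR (f i)) :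
    ∃ l : Filter ℝ, l.NeBot ∧ l ≤ atTop ∧ ∀ i, f i ∈ recurrentSubalgebra l := by
  choose s hs hdist using fun m : ℕ =>
    exists_ge_forall_dist_translate_lt hf (Nat.one_div_pos_of_nat (n := m)) m
  refine ⟨map s atTop, inferInstance, tendsto_atTop_mono hs tendsto_natCast_atTop_atTop,
    fun i t => tendsto_map'_iff.2 (tendsto_iff_dist_tendsto_zero.2 ?_)⟩
  exact squeeze_zero (fun _ => dist_nonneg) (fun m => (hdist m i t).le)
    tendsto_one_div_add_atTop_nhds_zero_nat

/-- Evaluation at `t` of functions recurrent along `l`. -/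
def recurrentEval (l : Filter ℝ) (t : ℝ) : recurrentSubalgebra l →+* ℂ :=
  (Pi.evalRingHom (fun _ => ℂ) t).comp (recurrentSubalgebra l).val

lemma aeval_recurrentSubalgebra_apply {l : Filter ℝ} (P : (recurrentSubalgebra l)[X]) (x : ℝ → ℂ)
    (t : ℝ) : aeval x P t = P.eval₂ (recurrentEval l t) (x t) :=
  P.hom_eval₂ (algebraMap _ (ℝ → ℂ)) (Pi.evalRingHom (fun _ => ℂ) t) x

lemma tendsto_eval₂_recurrentEval {l : Filter ℝ} (P : (recurrentSubalgebra l)[X]) {t : ℝ}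
    {x : ℝ → ℂ} {y : ℂ} (hx : Tendsto x l (𝓝 y)) :
    Tendsto (fun s => P.eval₂ (recurrentEval l (t + s)) (x s)) l
      (𝓝 (P.eval₂ (recurrentEval l t) y)) := by
  simp only [eval₂_eq_sum_range]
  exact tendsto_finsetSum _ fun i _ => ((P.coeff i).2 t).mul (hx.pow i)

/- Dividing a relation `P(t + s) = 0` by the top power of `t + s` and letting `s → ∞` along `l`
leaves the leading coefficient at `t`. -/
lemma transcendental_ofReal_recurrentSubalgebra {l : Filter ℝ} [l.NeBot] (hl : l ≤ atTop) :
    Transcendental (recurrentSubalgebra l) (fun t : ℝ => (t : ℂ)) := by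
  rw [transcendental_iff]
  intro P hP
  rw [← leadingCoeff_eq_zero]
  ext t
  have hshift : Tendsto (fun s => t + s) l atTop := tendsto_atTop_add_const_left _ t hl
  have hinv : Tendsto (fun s => ((t + s : ℝ) : ℂ)⁻¹) l (𝓝 0) :=
    tendsto_inv₀_cobounded.comp ((RCLike.tendsto_ofReal_atTop_cobounded ℂ).comp hshift)
  have hzero : ∀ᶠ s in l,
      P.reverse.eval₂ (recurrentEval l (t + s)) ((t + s : ℝ) : ℂ)⁻¹ = 0 := by
    filter_upwards [hshift.eventually_gt_atTop 0] with s hs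
    have hne : ((t + s : ℝ) : ℂ) ≠ 0 := mod_cast hs.ne'
    let _ := invertibleOfNonzero hne
    rw [← invOf_eq_inv, eval₂_reverse_eq_zero_iff, ← aeval_recurrentSubalgebra_apply P, hP,
      Pi.zero_apply]
  have hlim := (tendsto_eval₂_recurrentEval P.reverse hinv (t := t)).congr' hzero
  have := tendsto_nhds_unique hlim tendsto_const_nhds
  rwa [eval₂_at_zero, coeff_zero_reverse] at this

lemma exists_forall_sum_mul_pow_ne_zero {ι : Type*} [Finite ι] {l : Filter ℝ} [l.NeBot]
    (hl : l ≤ atTop) {N : ℕ} {a : ι → Fin N → ℝ → ℂ} (ha : ∀ i k, a i k ∈ recurrentSubalgebra l)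
    {t : ℝ} (hat : ∀ i, ∃ k, a i k t ≠ 0) :
    ∃ s : ℝ, ∀ i, ∑ k, a i k s * (s : ℂ) ^ (k : ℕ) ≠ 0 := by
  have := Fintype.ofFinite ι
  let P (i : ι) : (recurrentSubalgebra l)[X] := ∑ k : Fin N, monomial k ⟨a i k, ha i k⟩
  have hP (i : ι) (s : ℝ) :
      aeval (fun t : ℝ => (t : ℂ)) (P i) s = ∑ k, a i k s * (s : ℂ) ^ (k : ℕ) := by
    rw [aeval_recurrentSubalgebra_apply, eval₂_finsetSum]
    exact Finset.sum_congr rfl fun k _ => eval₂_monomial _ _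
  by_contra! hzero
  have hprod : ∏ i, P i = 0 := by
    refine transcendental_iff.1 (transcendental_ofReal_recurrentSubalgebra hl) _ ?_
    funext s
    obtain ⟨i, hi⟩ := hzero s
    rw [map_prod, Finset.prod_apply, Pi.zero_apply]
    exact Finset.prod_eq_zero (Finset.mem_univ i) ((hP i s).trans hi)
  have hprod_t : ∏ i, (P i).map (recurrentEval l t) = 0 := by
    rw [← Polynomial.map_prod, hprod, Polynomial.map_zero]
  obtain ⟨i, -, hi⟩ := Finset.prod_eq_zero_iff.1 hprod_t
  obtain ⟨k, hk⟩ := hat i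
  refine hk ?_
  have hcoeff := congrArg (coeff · (k : ℕ)) hi
  simpa [P, coeff_monomial, Fin.val_inj, recurrentEval] using hcoeff

end AlmostPeriodic

section Distributions

open Distribution

variable {E G : Type*} [NormedAddCommGroup E] [NormedSpace ℝ E] [NormedAddCommGroup G]
  [NormedSpace ℝ G]

lemma tsupport_compSubConstCLM [NormedSpace ℂ G] [SMulCommClass ℝ ℂ G] (φ : 𝓢(E, G)) (a : E) :
    tsupport (φ.compSubConstCLM ℂ a) = a +ᵥ tsupport φ := by
  ext x
  rw [mem_vadd_set_iff_neg_vadd_mem, vadd_eq_add, neg_add_eq_sub]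
  exact Set.ext_iff.1 (tsupport_comp_eq_preimage φ (Homeomorph.subRight a)) x

lemma exists_mem_tsupport_mem_dsupport [FiniteDimensional ℝ E] {D V : Type*} [AddCommMonoid V]
    [FunLike D 𝓢(E, G) V] [AddMonoidHomClass D 𝓢(E, G) V] (f : D) {φ : 𝓢(E, G)}
    (hφ : HasCompactSupport φ) (hf : f φ ≠ 0) : ∃ x ∈ tsupport φ, x ∈ dsupport f := by
  contrapose! hf
  have hcover (x : tsupport φ) : ∃ U, IsVanishingOn f U ∧ IsOpen U ∧ x.1 ∈ U :=
    (notMem_dsupport_iff _).1 (hf x x.2)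
  choose U hvanish hopen hmem using hcover
  obtain ⟨T, hT⟩ := hφ.isCompact.elim_finite_subcover U hopen
    fun x hx => mem_iUnion.2 ⟨⟨x, hx⟩, hmem ⟨x, hx⟩⟩
  obtain ⟨ρ, hρ⟩ := SmoothPartitionOfUnity.exists_isSubordinate (modelWithCornersSelf ℝ E)
    (isClosed_tsupport φ) (fun i : T => U i) (fun i => hopen i) (by rwa [iUnion_subtype])
  have hsmooth (i : T) : ContDiff ℝ (⊤ : ℕ∞) fun x => ρ i x • φ x :=
    (ρ i).contMDiff.contDiff.smul (φ.smooth _)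
  let piece (i : T) : 𝓢(E, G) := hφ.smul_left.toSchwartzMap (hsmooth i)
  have hsum : φ = ∑ i, piece i := by
    ext x
    rw [_root_.sum_apply]
    change φ x = ∑ i, ρ i x • φ x
    rw [← Finset.sum_smul]
    by_cases hx : x ∈ tsupport φ
    · have hone := ρ.sum_eq_one hx
      rw [finsum_eq_sum_of_fintype] at hone
      rw [hone, one_smul]
    · rw [image_eq_zero_of_notMem_tsupport hx, smul_zero]
  have hpiece (i : T) : tsupport (piece i) ⊆ U i :=
    (tsupport_smul_subset_left _ _).trans (hρ i)
  rw [hsum, map_sum]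
  exact Finset.sum_eq_zero fun i _ => hvanish i _ (hpiece i)

lemma mem_dsupport_iff_exists_hasCompactSupport [FiniteDimensional ℝ E] {D V : Type*} [Zero V]
    [FunLike D 𝓢(E, G) V] {f : D} {x : E} :
    x ∈ dsupport f ↔ ∀ U : Set E, IsOpen U → x ∈ U →
      ∃ φ : 𝓢(E, G), HasCompactSupport φ ∧ tsupport φ ⊆ U ∧ f φ ≠ 0 := by
  rw [mem_dsupport_iff_not_isVanishingOn]
  refine ⟨fun hx U hU hxU => ?_, fun hx U hxU hU hvanish => ?_⟩
  · obtain ⟨φ, hφ, hfφ⟩ := not_isVanishingOn_iff.1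
      (hx (U ∩ ball x 1) ⟨hxU, mem_ball_self one_pos⟩ (hU.inter isOpen_ball))
    have hcompact : HasCompactSupport φ :=
      (isCompact_closedBall x 1).of_isClosed_subset (isClosed_tsupport φ)
        (hφ.trans (inter_subset_right.trans ball_subset_closedBall))
    exact ⟨φ, hcompact, hφ.trans inter_subset_left, hfφ⟩
  · obtain ⟨φ, -, hφ, hfφ⟩ := hx U hU hxU
    exact hfφ (hvanish φ hφ)

/-- Multiplication of test functions by the `n`-th power of the linear form `ℓ`. -/
def mulPow (ℓ : E →L[ℝ] ℝ) (n : ℕ) : 𝓢(E, ℂ) →L[ℂ] 𝓢(E, ℂ) :=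
  smulLeftCLM ℂ fun y => (ℓ y : ℂ) ^ n

lemma mulPow_apply (ℓ : E →L[ℝ] ℝ) (n : ℕ) (φ : 𝓢(E, ℂ)) (y : E) :
    mulPow ℓ n φ y = (ℓ y : ℂ) ^ n * φ y :=
  smulLeftCLM_apply_apply (by fun_prop) φ y

lemma mulPow_zero (ℓ : E →L[ℝ] ℝ) (φ : 𝓢(E, ℂ)) : mulPow ℓ 0 φ = φ := by
  ext y
  simp [mulPow_apply]

lemma tsupport_mulPow_subset (ℓ : E →L[ℝ] ℝ) (n : ℕ) (φ : 𝓢(E, ℂ)) :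
    tsupport (mulPow ℓ n φ) ⊆ tsupport φ :=
  (tsupport_smulLeftCLM_subset _ φ).trans inter_subset_left

lemma mulPow_compSubConstCLM {ℓ : E →L[ℝ] ℝ} {v : E} (hv : ℓ v = 1) (n : ℕ) (s : ℝ)
    (φ : 𝓢(E, ℂ)) :
    mulPow ℓ n (φ.compSubConstCLM ℂ (s • v)) = ∑ k ∈ Finset.range (n + 1),
      ((n.choose k : ℂ) * (s : ℂ) ^ k) • (mulPow ℓ (n - k) φ).compSubConstCLM ℂ (s • v) := by
  ext y
  have hbinom := add_pow (s : ℂ) (ℓ (y - s • v)) n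
  have hshift : (s : ℂ) + ℓ (y - s • v) = ℓ y := by
    simp [hv]
  rw [hshift] at hbinom
  simp only [_root_.sum_apply, _root_.smul_apply, compSubConstCLM_apply, mulPow_apply, hbinom,
    Finset.sum_mul, smul_eq_mul]
  exact Finset.sum_congr rfl fun k _ => by ring

/-- The coefficient of `s ^ k` in the expansion of `∑ n, g n (ℓ ^ n • φ(· - s • v))` as a
polynomial in `s`, whose coefficients are themselves functions of `s`. The binomial coefficient
kills the terms with `n < k`, where `n - k` is truncated. -/
def shiftCoeff {N : ℕ} (g : Fin N → 𝓢(E, ℂ) →ₗ[ℂ] ℂ) (ℓ : E →L[ℝ] ℝ) (v : E) (φ : 𝓢(E, ℂ))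
    (k : Fin N) (s : ℝ) : ℂ :=
  ∑ n : Fin N, ((n : ℕ).choose k : ℂ) * g n ((mulPow ℓ (n - k) φ).compSubConstCLM ℂ (s • v))

lemma sum_mulPow_compSubConstCLM {N : ℕ} (g : Fin N → 𝓢(E, ℂ) →ₗ[ℂ] ℂ) {ℓ : E →L[ℝ] ℝ} {v : E}
    (hv : ℓ v = 1) (φ : 𝓢(E, ℂ)) (s : ℝ) :
    ∑ n : Fin N, g n (mulPow ℓ n (φ.compSubConstCLM ℂ (s • v))) =
      ∑ k, shiftCoeff g ℓ v φ k s * (s : ℂ) ^ (k : ℕ) := by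
  simp only [shiftCoeff, Finset.sum_mul]
  rw [Finset.sum_comm]
  refine Finset.sum_congr rfl fun n _ => ?_
  rw [Fin.sum_univ_eq_sum_range (fun k => ((n : ℕ).choose k : ℂ) *
      g n ((mulPow ℓ (n - k) φ).compSubConstCLM ℂ (s • v)) * (s : ℂ) ^ k) N,
    mulPow_compSubConstCLM hv, map_sum]
  simp only [map_smul, smul_eq_mul, mul_right_comm]
  refine Finset.sum_subset (Finset.range_subset_range.2 n.2) fun k _ hk => ?_
  rw [Nat.choose_eq_zero_of_lt (by simpa using hk)]
  simp

/- If `m` is the largest index for which `g m` does not vanish on the test functions in `U`, the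
coefficient of index `m` at `s = 0` reduces to `g m φ`. -/
lemma exists_shiftCoeff_zero_ne_zero [FiniteDimensional ℝ E] {N : ℕ}
    {g : Fin N → 𝓢(E, ℂ) →ₗ[ℂ] ℂ} (ℓ : E →L[ℝ] ℝ) (v : E) {x : E} (hx : x ∈ ⋃ n, dsupport (g n))
    {U : Set E} (hU : IsOpen U) (hxU : x ∈ U) :
    ∃ φ : 𝓢(E, ℂ), HasCompactSupport φ ∧ tsupport φ ⊆ U ∧ ∃ k, shiftCoeff g ℓ v φ k 0 ≠ 0 := by
  obtain ⟨n, hn⟩ := mem_iUnion.1 hx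
  obtain ⟨m, ⟨φ, hcompact, hφU, hφ⟩, hmax⟩ :=
    (toFinite {n | ∃ φ : 𝓢(E, ℂ), HasCompactSupport φ ∧ tsupport φ ⊆ U ∧ g n φ ≠ 0}).exists_maximal
      ⟨n, mem_dsupport_iff_exists_hasCompactSupport.1 hn U hU hxU⟩
  refine ⟨φ, hcompact, hφU, m, ?_⟩
  have hother (n : Fin N) (hnm : n ≠ m) :
      ((n : ℕ).choose m : ℂ) * g n ((mulPow ℓ (n - m) φ).compSubConstCLM ℂ ((0 : ℝ) • v)) = 0 := by
    rcases hnm.lt_or_gt with hlt | hgt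
    · rw [Nat.choose_eq_zero_of_lt hlt, Nat.cast_zero, zero_mul]
    · have hsub := tsupport_mulPow_subset ℓ (n - m) φ
      have hvanish : g n (mulPow ℓ (n - m) φ) = 0 := by
        by_contra hne
        exact hgt.not_ge (hmax ⟨_, hcompact.of_isClosed_subset (isClosed_tsupport _) hsub,
          hsub.trans hφU, hne⟩ hgt.le)
      rw [zero_smul, compSubConstCLM_zero, ContinuousLinearMap.id_apply, hvanish, mul_zero]
  rw [shiftCoeff, Finset.sum_eq_single m (fun n _ => hother n) (by simp)]
  simpa [mulPow_zero] using hφ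

/-- Almost periodicity of a functional in the direction `v`: all its values on translates of a
compactly supported test function along `v` form an almost periodic function. -/
def AlmostPeriodicAlong (v : E) (f : 𝓢(E, ℂ) → ℂ) : Prop :=
  ∀ φ : 𝓢(E, ℂ), HasCompactSupport φ → APFunctionR fun s => f (φ.compSubConstCLM ℂ (s • v))

lemma exists_forall_apply_translate_ne_zero {N : ℕ} {g : Fin N → 𝓢(E, ℂ) →ₗ[ℂ] ℂ}
    {ℓ : E →L[ℝ] ℝ} {v : E} (hv : ℓ v = 1) (hg : ∀ n, AlmostPeriodicAlong v (g n))
    {ι : Type*} [Finite ι] {φ : ι → 𝓢(E, ℂ)} (hφ : ∀ i, HasCompactSupport (φ i))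
    (hcoeff : ∀ i, ∃ k, shiftCoeff g ℓ v (φ i) k 0 ≠ 0) :
    ∃ s : ℝ, ∀ i, ∑ n : Fin N, g n (mulPow ℓ n ((φ i).compSubConstCLM ℂ (s • v))) ≠ 0 := by
  have hap (j : ι × Fin N × Fin N) : APFunctionR fun s =>
      g j.2.1 ((mulPow ℓ (j.2.1 - j.2.2) (φ j.1)).compSubConstCLM ℂ (s • v)) :=
    hg _ _ ((hφ _).of_isClosed_subset (isClosed_tsupport _) (tsupport_mulPow_subset _ _ _))
  obtain ⟨l, _, hl, hrec⟩ := exists_forall_mem_recurrentSubalgebra hap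
  have hmem (i : ι) (k : Fin N) : shiftCoeff g ℓ v (φ i) k ∈ recurrentSubalgebra l := by
    have := sum_mem (t := Finset.univ) fun (n : Fin N) _ =>
      (recurrentSubalgebra l).smul_mem (hrec (i, n, k)) ((n : ℕ).choose k : ℂ)
    convert! this using 1
    ext s
    simp [shiftCoeff]
  obtain ⟨s, hs⟩ := exists_forall_sum_mul_pow_ne_zero hl hmem hcoeff
  exact ⟨s, fun i => sum_mulPow_compSubConstCLM g hv (φ i) s ▸ hs i⟩

lemma exists_encard_le_encard_dsupport_inter [FiniteDimensional ℝ E] {N : ℕ}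
    {g : Fin N → 𝓢(E, ℂ) →ₗ[ℂ] ℂ} {F : 𝓢(E, ℂ) →ₗ[ℂ] ℂ} {ℓ : E →L[ℝ] ℝ} {v : E} (hv : ℓ v = 1)
    (hg : ∀ n, AlmostPeriodicAlong v (g n)) (hF : ∀ φ, F φ = ∑ n : Fin N, g n (mulPow ℓ n φ))
    {U : Set E} (hU : IsOpen U) {J : Set E} (hJ : J.Finite)
    (hJU : J ⊆ (⋃ n, dsupport (g n)) ∩ U) :
    ∃ s : ℝ, J.encard ≤ (dsupport F ∩ (s • v +ᵥ U)).encard := by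
  obtain ⟨V, hV, hdisj⟩ := hJ.t2_separation
  have hfin : Finite J := hJ
  choose φ hcompact hsupp hcoeff using fun j : J => exists_shiftCoeff_zero_ne_zero ℓ v (hJU j.2).1
    ((hV j).2.inter hU) ⟨(hV j).1, (hJU j.2).2⟩
  obtain ⟨s, hs⟩ := exists_forall_apply_translate_ne_zero hv hg hcompact hcoeff
  have hpoint (j : J) : ∃ y ∈ dsupport F, y ∈ s • v +ᵥ (V j ∩ U) := by
    obtain ⟨y, hy, hyF⟩ := exists_mem_tsupport_mem_dsupport F
      (φ := (φ j).compSubConstCLM ℂ (s • v))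
      (by rw [HasCompactSupport, tsupport_compSubConstCLM]; exact (hcompact j).vadd _)
      (by rw [hF]; exact hs j)
    rw [tsupport_compSubConstCLM] at hy
    exact ⟨y, hyF, vadd_set_mono (hsupp j) hy⟩
  choose y hyF hyV using hpoint
  have hinj : Function.Injective y := by
    intro i j hij
    by_contra hne
    have hi := mem_vadd_set_iff_neg_vadd_mem.1 (hyV i)
    have hj := mem_vadd_set_iff_neg_vadd_mem.1 (hyV j)
    exact disjoint_left.1 (hdisj i.2 j.2 (Subtype.coe_ne_coe.2 hne)) hi.1 (hij ▸ hj.1)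
  refine ⟨s, ?_⟩
  calc J.encard = (range y).encard := by rw [← image_univ, hinj.encard_image, encard_univ]; rfl
    _ ≤ (dsupport F ∩ (s • v +ᵥ U)).encard := encard_le_encard <| range_subset_iff.2 fun j =>
        ⟨hyF j, vadd_set_mono inter_subset_right (hyV j)⟩

theorem statement13_general [FiniteDimensional ℝ E] {N : ℕ} {g : Fin N → 𝓢(E, ℂ) →ₗ[ℂ] ℂ}
    {F : 𝓢(E, ℂ) →ₗ[ℂ] ℂ} {ℓ : E →L[ℝ] ℝ} {v : E} (hv : ℓ v = 1)
    (hg : ∀ n, AlmostPeriodicAlong v (g n)) (hF : ∀ φ, F φ = ∑ n : Fin N, g n (mulPow ℓ n φ))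
    (x : E) (r : ℝ) :
    ((⋃ n, dsupport (g n)) ∩ ball x r).encard ≤ ⨆ y, (dsupport F ∩ ball y r).encard := by
  refine ENat.forall_natCast_le_iff_le.1 fun k hk => ?_
  obtain ⟨J, hJU, hJ⟩ := exists_subset_encard_eq hk
  obtain ⟨s, hs⟩ := exists_encard_le_encard_dsupport_inter hv hg hF isOpen_ball
    (finite_of_encard_eq_coe hJ) hJU
  rw [vadd_ball, hJ] at hs
  exact le_iSup_of_le (s • v +ᵥ x) hs

end Distributions

section EuclideanSpace

open Distribution

variable {d : ℕ}

lemma tdSupport_eq_dsupport (f : TemperedDist d) : tdSupport f = dsupport f :=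
  Set.ext fun _ => mem_dsupport_iff_exists_hasCompactSupport.symm

lemma BoundedDensity.of_encard_inter_ball_le {A B : Set (Rd d)} (hA : BoundedDensity A)
    (h : ∀ x, (B ∩ ball x 1).encard ≤ ⨆ y, (A ∩ ball y 1).encard) : BoundedDensity B := by
  obtain ⟨hfin, K, hK⟩ := hA
  have hB (x : Rd d) : (B ∩ ball x 1).Finite ∧ (B ∩ ball x 1).ncard ≤ K :=
    encard_le_coe_iff_finite_ncard_le.1 <| (h x).trans <| iSup_le fun y =>
      encard_le_coe_iff_finite_ncard_le.2 ⟨hfin y 1, hK y⟩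
  refine ⟨fun x r => ?_, K, fun x => (hB x).2⟩
  obtain ⟨t, htfin, hcover⟩ := Metric.totallyBounded_iff.1
    ((isCompact_closedBall x r).totallyBounded.subset ball_subset_closedBall) 1 one_pos
  refine (htfin.biUnion fun y _ => (hB y).1).subset ?_
  rw [← inter_iUnion₂]
  exact inter_subset_inter_right B hcover

lemma almostPeriodicAlong_single {f : TemperedDist d} (i : Fin d)
    (hf : ∀ ψ : Rd d → ℂ, ContDiff ℝ (⊤ : ℕ∞) ψ → HasCompactSupport ψ →
      ∀ Φ : Rd d → SchwartzMap (Rd d) ℂ, (∀ t y, Φ t y = ψ (t - y)) →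
      ∀ t : Rd d, APFunctionR fun s => f (Φ (WithLp.toLp 2 (Function.update t i s)))) :
    AlmostPeriodicAlong (EuclideanSpace.single i 1) f := by
  intro φ hφ
  have h := hf (fun y => φ (-y)) ((φ.smooth _).comp contDiff_neg)
    (hφ.comp_homeomorph (Homeomorph.neg (Rd d))) (fun t => φ.compSubConstCLM ℂ t)
    (fun t y => by simp) 0
  convert h using 5 with s
  ext j
  simp [Function.update_apply]

end EuclideanSpace

/-- (The Lemma.) Let `g_0, …, g_N` be tempered distributions
on `ℝ^d` such that for every smooth compactly supported `φ` the functions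
`t ↦ g_n(φ(t - ·))` are almost periodic in `t₁` for every fixed
`(t₂, …, t_d)`. If `F = Σ_{n=0}^N y₁^n g_n` has support of bounded density,
then `⋃_n supp g_n` has bounded density. -/
theorem statement13 {d : ℕ} (hd : 0 < d) (N : ℕ)
    (g : Fin (N + 1) → TemperedDist d) (F : TemperedDist d)
    (hap : ∀ (n : Fin (N + 1)) (ψ : Rd d → ℂ), ContDiff ℝ (⊤ : ℕ∞) ψ →
      HasCompactSupport ψ →
      ∀ Φ : Rd d → SchwartzMap (Rd d) ℂ, (∀ t y, Φ t y = ψ (t - y)) →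
      ∀ t : Rd d, APFunctionR fun s => g n (Φ (WithLp.toLp 2 (Function.update t ⟨0, hd⟩ s))))
    (hsum : ∀ (φ : SchwartzMap (Rd d) ℂ) (Ψ : Fin (N + 1) → SchwartzMap (Rd d) ℂ),
      (∀ (n : Fin (N + 1)) (y : Rd d),
        Ψ n y = (((y ⟨0, hd⟩ : ℝ) ^ (n : ℕ) : ℝ) : ℂ) * φ y) →
      F φ = ∑ n, g n (Ψ n))
    (hBD : BoundedDensity (tdSupport F)) :
    BoundedDensity (⋃ n, tdSupport (g n)) := by
  simp only [tdSupport_eq_dsupport] at hBD ⊢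
  exact hBD.of_encard_inter_ball_le fun x => statement13_general
    (g := fun n => (g n).toLinearMap) (F := F.toLinearMap) (ℓ := EuclideanSpace.proj ⟨0, hd⟩)
    (by simp) (fun n => almostPeriodicAlong_single _ (hap n))
    (fun φ => hsum φ _ fun n y => by simp [mulPow_apply]) x 1
end
end

section
/- There exists a purely point measure μ on ℝ² belonging to S*(ℝ²) such that: (i) supp μ is uniformly discrete; (ii) the Fourier transform μ̂ is a purely point measure with |μ̂|(B(0,r)) = O(r²) as r → ∞; and yet (iii) supp μ is not contained in any finite union of translates of full-rank lattices in ℝ². -/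
open MeasureTheory SchwartzMap Metric Set
open scoped Pointwise RealInnerProductSpace ENNReal NNReal

noncomputable section

/-!
In the plane, let `Λ_j` be the coset of points `(s_j + m, 2^j (2n + 1))` with `m, n ∈ ℤ`, for
`j ∈ ℕ`. The second coordinates of points of different `Λ_j` are integers with different 2-adic
valuations, so `⋃ Λ_j` is a disjoint union whose distinct points are at distance at least `1`. By
Poisson summation the Fourier transform of `∑ c_j δ_{Λ_j}` is carried by the duals of the lattices
`Λ_j - Λ_j`; each of them has `O(r^2)` points in `B(0, r)`, and positive weights `c_j` that decay
fast enough turn this into a bound for the whole sum. Finally, the points of finitely many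
translates of lattices span a finite-dimensional space over `ℚ`, whereas the numbers `s_j` can be
chosen linearly independent over `ℚ`.
-/

/-! ### Integer vectors -/

section IntVec

lemma inv_pow_le_pow_mul_inv_pow {K : Type*} [Field K] [LinearOrder K] [IsStrictOrderedRing K]
    {a b C : K} (ha : 0 < a) (hb : 0 < b) (h : a ≤ C * b) (k : ℕ) :
    (b ^ k)⁻¹ ≤ C ^ k * (a ^ k)⁻¹ := by
  rw [← div_eq_mul_inv, inv_eq_one_div, div_le_div_iff₀ (pow_pos hb k) (pow_pos ha k), one_mul,
    ← mul_pow]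
  gcongr

lemma coe_restrictScalars_basisFun_equivFun_symm {ι : Type*} [Finite ι] (n : ι → ℤ) :
    (((Pi.basisFun ℝ ι).restrictScalars ℤ).equivFun.symm n : ι → ℝ) = fun i => (n i : ℝ) := by
  classical
  have := Fintype.ofFinite ι
  ext j
  simp [Module.Basis.equivFun_symm_apply, Finset.sum_apply, Pi.single_apply]

lemma summable_one_add_norm_pow_inv (ι : Type*) [Fintype ι] :
    Summable fun n : ι → ℤ => ((1 + ‖n‖) ^ (Fintype.card ι + 1))⁻¹ := by
  let e := ((Pi.basisFun ℝ ι).restrictScalars ℤ).equivFun.symm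
  have hnorm (n : ι → ℤ) : ‖e n‖ = ‖n‖ := by
    rw [Submodule.coe_norm, coe_restrictScalars_basisFun_equivFun_symm]
    rfl
  have hrank : Module.finrank ℤ (Submodule.span ℤ (Set.range (Pi.basisFun ℝ ι))) <
      Fintype.card ι + 1 := by
    rw [ZLattice.rank ℝ, Module.finrank_fintype_fun_eq_card]
    exact Nat.lt_succ_self _
  have hsum := (e.toEquiv.summable_iff).2 (ZLattice.summable_norm_pow_inv _ _ hrank)
  refine hsum.of_norm_bounded_eventually ?_
  filter_upwards [(Set.finite_singleton (0 : ι → ℤ)).compl_mem_cofinite] with n hn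
  have : 0 < ‖n‖ := norm_pos_iff.2 hn
  rw [Real.norm_of_nonneg (by positivity), Function.comp_apply, LinearEquiv.coe_toEquiv, hnorm,
    inv_pow]
  gcongr
  linarith

lemma encard_norm_le_le (ι : Type*) [Fintype ι] {R : ℝ} (hR : 0 ≤ R) :
    (({n : ι → ℤ | ‖n‖ ≤ R}.encard : ℕ∞) : ℝ≥0∞) ≤
      ENNReal.ofReal ((2 * R + 1) ^ Fintype.card ι) := by
  classical
  have hball : {n : ι → ℤ | ‖n‖ ≤ R} =
      Fintype.piFinset fun _ : ι => Finset.Icc (-⌊R⌋) ⌊R⌋ := by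
    ext n
    have habs (i : ι) : ‖n i‖ ≤ R ↔ n i ∈ Finset.Icc (-⌊R⌋) ⌊R⌋ := by
      rw [Finset.mem_Icc, ← abs_le, Int.le_floor, Int.cast_abs, Int.norm_eq_abs]
    simp only [mem_ofPred_eq, pi_norm_le_iff_of_nonneg hR, Finset.mem_coe, Fintype.mem_piFinset,
      habs]
  have hcard : ((Finset.Icc (-⌊R⌋) ⌊R⌋).card : ℝ) ≤ 2 * R + 1 := by
    have hfloor : 0 ≤ ⌊R⌋ := Int.floor_nonneg.2 hR
    rw [Int.card_Icc, ← Int.cast_natCast, Int.toNat_of_nonneg (by lia)]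
    push_cast
    linarith [Int.floor_le R]
  rw [hball, Set.encard_coe_eq_coe_finsetCard, Fintype.card_piFinset, Finset.prod_const,
    Finset.card_univ, ENat.toENNReal_coe, ← ENNReal.ofReal_natCast]
  push_cast
  gcongr

variable {d : ℕ}

/-- The integer vector `n ∈ ℤ^d` as a point of `ℝ^d`. -/
def intVec (n : Fin d → ℤ) : Rd d :=
  WithLp.toLp 2 fun i => (n i : ℝ)

@[simp]
lemma intVec_apply (n : Fin d → ℤ) (i : Fin d) : intVec n i = n i := rfl

lemma norm_le_norm_intVec (n : Fin d → ℤ) : ‖n‖ ≤ ‖intVec n‖ := by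
  refine (pi_norm_le_iff_of_nonneg (norm_nonneg _)).2 fun i => ?_
  simpa only [intVec_apply, Int.norm_cast_real] using PiLp.norm_apply_le (intVec n) i

/-- A family indexed by `ℤ^d` *spreads linearly* if `‖p n‖` grows at least linearly in `‖n‖`,
as it does for the points of a coset of a full-rank lattice. -/
def SpreadsLinearly {E : Type*} [Norm E] (p : (Fin d → ℤ) → E) : Prop :=
  ∃ C : ℝ, ∀ n, 1 + ‖n‖ ≤ C * (1 + ‖p n‖)

namespace SpreadsLinearly

variable {E : Type*} [SeminormedAddCommGroup E] {p : (Fin d → ℤ) → E}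

lemma of_map_eq_intVec_add [NormedSpace ℝ E] (B : E →L[ℝ] Rd d) (t : Rd d)
    (h : ∀ n, B (p n) = intVec n + t) : SpreadsLinearly p := by
  refine ⟨1 + ‖t‖ + ‖B‖, fun n => ?_⟩
  have hn : ‖n‖ ≤ ‖B‖ * ‖p n‖ + ‖t‖ := calc
    ‖n‖ ≤ ‖intVec n‖ := norm_le_norm_intVec n
    _ = ‖B (p n) - t‖ := by rw [h, add_sub_cancel_right]
    _ ≤ ‖B‖ * ‖p n‖ + ‖t‖ := (norm_sub_le _ _).trans (by gcongr; exact B.le_opNorm _)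
  nlinarith [norm_nonneg t, norm_nonneg B, norm_nonneg (p n),
    mul_nonneg (norm_nonneg t) (norm_nonneg (p n))]

lemma summable_one_add_norm_pow_inv (hp : SpreadsLinearly p) :
    Summable fun n => ((1 + ‖p n‖) ^ (d + 1))⁻¹ := by
  obtain ⟨C, hC⟩ := hp
  have hsum := (_root_.summable_one_add_norm_pow_inv (Fin d)).mul_left (C ^ (d + 1))
  rw [Fintype.card_fin] at hsum
  exact hsum.of_nonneg_of_le (fun n => by positivity) fun n =>
    inv_pow_le_pow_mul_inv_pow (by positivity) (by positivity) (hC n) _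

lemma exists_encard_norm_lt_le (hp : SpreadsLinearly p) :
    ∃ D : ℝ, 0 ≤ D ∧ ∀ r : ℝ, 1 ≤ r →
      (({n | ‖p n‖ < r}.encard : ℕ∞) : ℝ≥0∞) ≤ ENNReal.ofReal (D * r ^ d) := by
  obtain ⟨C, hC⟩ := hp
  have hC0 : 0 ≤ C := by
    by_contra! hneg
    nlinarith [hC 0, norm_nonneg (p 0), norm_nonneg (0 : Fin d → ℤ)]
  refine ⟨(4 * C + 1) ^ d, by positivity, fun r hr => ?_⟩
  have hsub : {n | ‖p n‖ < r} ⊆ {n | ‖n‖ ≤ C * (1 + r)} := fun n hn => by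
    have : C * (1 + ‖p n‖) ≤ C * (1 + r) := by gcongr; exact le_of_lt hn
    exact (le_add_of_nonneg_left zero_le_one).trans ((hC n).trans this)
  calc (({n | ‖p n‖ < r}.encard : ℕ∞) : ℝ≥0∞)
      ≤ (({n : Fin d → ℤ | ‖n‖ ≤ C * (1 + r)}.encard : ℕ∞) : ℝ≥0∞) := by
        exact_mod_cast Set.encard_le_encard hsub
    _ ≤ ENNReal.ofReal ((2 * (C * (1 + r)) + 1) ^ Fintype.card (Fin d)) :=
        encard_norm_le_le (Fin d) (by positivity)
    _ ≤ ENNReal.ofReal ((4 * C + 1) ^ d * r ^ d) := by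
        rw [Fintype.card_fin, ← mul_pow]
        gcongr
        nlinarith

end SpreadsLinearly

end IntVec

/-! ### Poisson summation -/

section UnitCube

lemma setIntegral_tsum_vadd_eq_integral {G X E : Type*} [AddGroup G] [Countable G] [AddAction G X]
    [MeasurableSpace X] [MeasurableConstVAdd G X] {μ : Measure X} [VAddInvariantMeasure G X μ]
    [NormedAddCommGroup E] [NormedSpace ℝ E] {s : Set X} (hs : IsAddFundamentalDomain G s μ)
    {f : X → E} (hf : Integrable f μ) :
    ∫ x in s, ∑' g : G, f (g +ᵥ x) ∂μ = ∫ x, f x ∂μ := by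
  have hmeas (g : G) : AEStronglyMeasurable (fun x => f (g +ᵥ x)) (μ.restrict s) :=
    (hf.aestronglyMeasurable.comp_quasiMeasurePreserving
      (measurePreserving_vadd g μ).quasiMeasurePreserving).restrict
  have hfin : ∑' g : G, ∫⁻ x in s, ‖f (g +ᵥ x)‖ₑ ∂μ ≠ ∞ := by
    rw [← hs.lintegral_eq_tsum'' fun x => ‖f x‖ₑ]
    exact hf.2.ne
  rw [hs.integral_eq_tsum'' f hf, integral_tsum hmeas hfin]

lemma setIntegral_tsum_add_intCast_eq_integral {ι E : Type*} [Fintype ι] [NormedAddCommGroup E]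
    [NormedSpace ℝ E] {f : (ι → ℝ) → E} (hf : Integrable f) :
    ∫ x in Set.pi univ fun _ => Ioc (0 : ℝ) 1, ∑' n : ι → ℤ, f (x + fun i => (n i : ℝ)) =
      ∫ x, f x := by
  let e := ((Pi.basisFun ℝ ι).restrictScalars ℤ).equivFun.symm.toEquiv
  have : Countable (Submodule.span ℤ (Set.range (Pi.basisFun ℝ ι))).toAddSubgroup :=
    e.surjective.countable
  have hae : (Set.pi univ fun _ : ι => Ioc (0 : ℝ) 1) =ᵐ[volume]
      ZSpan.fundamentalDomain (Pi.basisFun ℝ ι) := by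
    rw [ZSpan.fundamentalDomain_pi_basisFun]
    exact Measure.univ_pi_Ioc_ae_eq_Icc.trans Measure.univ_pi_Ico_ae_eq_Icc.symm
  rw [setIntegral_congr_set hae,
    ← setIntegral_tsum_vadd_eq_integral (ZSpan.isAddFundamentalDomain' (Pi.basisFun ℝ ι) _) hf]
  refine integral_congr_ae (.of_forall fun x => .trans (tsum_congr fun n => ?_) (e.tsum_eq _))
  rw [add_comm x, ← coe_restrictScalars_basisFun_equivFun_symm]
  rfl

end UnitCube

section Poisson

open scoped FourierTransform

lemma norm_apply_le_sup_seminorm_mul {E F : Type*} (𝕜 : Type*) [NormedAddCommGroup E]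
    [NormedSpace ℝ E] [NormedAddCommGroup F] [NormedSpace ℝ F] [NormedField 𝕜] [NormedSpace 𝕜 F]
    [SMulCommClass ℝ 𝕜 F] (φ : 𝓢(E, F)) (k : ℕ) (x : E) :
    ‖φ x‖ ≤ 2 ^ k * (Finset.Iic (k, 0)).sup (fun m => SchwartzMap.seminorm 𝕜 m.1 m.2) φ *
      ((1 + ‖x‖) ^ k)⁻¹ := by
  rw [← div_eq_mul_inv, le_div_iff₀ (by positivity), mul_comm]
  simpa only [norm_iteratedFDeriv_zero] using
    SchwartzMap.one_add_le_sup_seminorm_apply (𝕜 := 𝕜) (m := (k, 0)) le_rfl le_rfl φ x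

variable {d : ℕ}

/-- The canonical projection of `ℝ^d` onto the torus `(ℝ/ℤ)^d`. -/
def toTorus : C(Rd d, UnitAddTorus (Fin d)) where
  toFun x i := (x i : UnitAddCircle)
  continuous_toFun := continuous_pi fun i => continuous_quotient_mk'.comp (by fun_prop)

lemma isQuotientMap_toTorus : Topology.IsQuotientMap (toTorus (d := d)) :=
  (IsOpenQuotientMap.piMap fun _ => QuotientAddGroup.isOpenQuotientMap_mk).isQuotientMap.comp
    (PiLp.homeomorph 2 _).isQuotientMap

lemma toTorus_eq_iff {x y : Rd d} : toTorus x = toTorus y ↔ ∃ n, y = x + intVec n := by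
  have hcoord (i : Fin d) : (x i : UnitAddCircle) = y i ↔ ∃ m : ℤ, y i = x i + m := by
    rw [QuotientAddGroup.eq, AddSubgroup.mem_zmultiples_iff]
    refine exists_congr fun m => ?_
    rw [zsmul_one, eq_neg_add_iff_add_eq, eq_comm]
  simp only [funext_iff, toTorus, ContinuousMap.coe_mk, hcoord, Classical.skolem, PiLp.ext_iff,
    PiLp.add_apply, intVec_apply]

lemma mFourier_toTorus (k : Fin d → ℤ) (x : Rd d) :
    UnitAddTorus.mFourier k (toTorus x) = e2pi (intVec k) x := by
  simp only [UnitAddTorus.mFourier, toTorus, e2pi, ContinuousMap.coe_mk, fourier_coe_apply,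
    ← Complex.exp_sum, PiLp.inner_apply, intVec_apply, RCLike.inner_apply, conj_trivial]
  push_cast
  rw [Finset.mul_sum]
  congr 1
  refine Finset.sum_congr rfl fun i _ => ?_
  ring

lemma summable_norm_restrict_comp_addRight_intVec (φ : 𝓢(Rd d, ℂ))
    (K : TopologicalSpace.Compacts (Rd d)) :
    Summable fun n =>
      ‖((φ : C(Rd d, ℂ)).comp (ContinuousMap.addRight (intVec n))).restrict K‖ := by
  obtain ⟨R, hR0, hR⟩ := K.isCompact.isBounded.exists_pos_norm_le
  let S := 2 ^ (d + 1) * (Finset.Iic (d + 1, 0)).sup (fun m => SchwartzMap.seminorm ℂ m.1 m.2) φ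
  have : 0 ≤ S := by positivity
  have hgrowth (n : Fin d → ℤ) (x : K) : 1 + ‖n‖ ≤ (1 + R) * (1 + ‖(x : Rd d) + intVec n‖) := by
    have hn : ‖n‖ ≤ ‖(x : Rd d) + intVec n‖ + ‖(x : Rd d)‖ :=
      (norm_le_norm_intVec n).trans (norm_le_add_norm_add' _ _)
    nlinarith [hR x x.2, norm_nonneg ((x : Rd d) + intVec n)]
  have hsum := (summable_one_add_norm_pow_inv (Fin d)).mul_left (S * (1 + R) ^ (d + 1))
  rw [Fintype.card_fin] at hsum
  refine hsum.of_nonneg_of_le (fun _ => norm_nonneg _) fun n => ?_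
  refine (ContinuousMap.norm_le _ (by positivity)).2 fun x => ?_
  calc ‖φ (x + intVec n)‖
    _ ≤ S * ((1 + ‖(x : Rd d) + intVec n‖) ^ (d + 1))⁻¹ :=
        norm_apply_le_sup_seminorm_mul ℂ φ (d + 1) _
    _ ≤ S * ((1 + R) ^ (d + 1) * ((1 + ‖n‖) ^ (d + 1))⁻¹) := by
        gcongr
        exact inv_pow_le_pow_mul_inv_pow (by positivity) (by positivity) (hgrowth n x) _
    _ = S * (1 + R) ^ (d + 1) * ((1 + ‖n‖) ^ (d + 1))⁻¹ := (mul_assoc _ _ _).symm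

/-- The `ℤ^d`-periodization of a Schwartz function, as a function on `ℝ^d`. -/
def periodization (φ : 𝓢(Rd d, ℂ)) : C(Rd d, ℂ) :=
  ∑' n, (φ : C(Rd d, ℂ)).comp (ContinuousMap.addRight (intVec n))

lemma periodization_apply (φ : 𝓢(Rd d, ℂ)) (x : Rd d) :
    periodization φ x = ∑' n, φ (x + intVec n) :=
  (ContinuousMap.tsum_apply (ContinuousMap.summable_of_locally_summable_norm
    (summable_norm_restrict_comp_addRight_intVec φ)) x).symm

lemma intVec_add (m n : Fin d → ℤ) : intVec (m + n) = intVec m + intVec n := by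
  ext i
  simp only [intVec_apply, PiLp.add_apply, Pi.add_apply, Int.cast_add]

lemma periodization_factorsThrough_toTorus (φ : 𝓢(Rd d, ℂ)) :
    Function.FactorsThrough (periodization φ) toTorus := by
  intro x y hxy
  obtain ⟨m, rfl⟩ := toTorus_eq_iff.1 hxy
  simp only [periodization_apply, add_assoc, ← intVec_add]
  exact ((Equiv.addLeft m).tsum_eq fun n => φ (x + intVec n)).symm

/-- The `ℤ^d`-periodization of a Schwartz function, as a function on the torus. -/
def torusPeriodization (φ : 𝓢(Rd d, ℂ)) : C(UnitAddTorus (Fin d), ℂ) :=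
  isQuotientMap_toTorus.lift (periodization φ) (periodization_factorsThrough_toTorus φ)

lemma torusPeriodization_toTorus (φ : 𝓢(Rd d, ℂ)) (x : Rd d) :
    torusPeriodization φ (toTorus x) = ∑' n, φ (x + intVec n) := by
  rw [← periodization_apply]
  exact DFunLike.congr_fun (isQuotientMap_toTorus.lift_comp (periodization φ)
    (periodization_factorsThrough_toTorus φ)) x

lemma integrable_mFourier_mul (φ : 𝓢(Rd d, ℂ)) (k : Fin d → ℤ) :
    Integrable fun x : Rd d => UnitAddTorus.mFourier k (toTorus x) * φ x := by
  refine φ.integrable.bdd_mul (c := 1) (by fun_prop) (.of_forall fun x => ?_)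
  exact ((UnitAddTorus.mFourier k).norm_coe_le_norm _).trans UnitAddTorus.mFourier_norm.le

lemma integral_mFourier_neg_mul (φ : 𝓢(Rd d, ℂ)) (k : Fin d → ℤ) :
    ∫ x : Rd d, UnitAddTorus.mFourier (-k) (toTorus x) * φ x = 𝓕 φ (intVec k) := by
  rw [SchwartzMap.fourier_coe, Real.fourier_eq']
  refine integral_congr_ae (.of_forall fun x => ?_)
  have hk : intVec (-k) = -intVec k := by ext; simp
  simp only [mFourier_toTorus, e2pi, hk, real_inner_comm x, inner_neg_right, smul_eq_mul]
  push_cast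
  ring_nf

lemma mFourierCoeff_torusPeriodization (φ : 𝓢(Rd d, ℂ)) (k : Fin d → ℤ) :
    UnitAddTorus.mFourierCoeff (torusPeriodization φ) k = 𝓕 φ (intVec k) := by
  let g (x : Rd d) : ℂ := UnitAddTorus.mFourier (-k) (toTorus x) * φ x
  have hper (x : Rd d) (n : Fin d → ℤ) : g (x + intVec n) =
      UnitAddTorus.mFourier (-k) (toTorus x) * φ (x + intVec n) := by
    simp only [g, ← toTorus_eq_iff.2 ⟨n, rfl⟩]
  have hpres := PiLp.volume_preserving_toLp (Fin d)
  have hemb := (MeasurableEquiv.toLp 2 (Fin d → ℝ)).measurableEmbedding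
  calc UnitAddTorus.mFourierCoeff (torusPeriodization φ) k
    _ = ∫ x in Set.pi univ fun _ => Ioc (0 : ℝ) 1,
          ∑' n : Fin d → ℤ, g (WithLp.toLp 2 x + intVec n) := by
      simp only [hper, tsum_mul_left, ← torusPeriodization_toTorus]
      rw [UnitAddTorus.mFourierCoeff_eq_integral _ k 0]
      simp only [Pi.zero_apply, zero_add, Set.pi, mem_univ, true_imp_iff]
      rfl
    _ = ∫ x : Fin d → ℝ, g (WithLp.toLp 2 x) :=
      setIntegral_tsum_add_intCast_eq_integral
        ((hpres.integrable_comp_emb hemb).2 (integrable_mFourier_mul φ (-k)))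
    _ = ∫ x, g x := hpres.integral_comp hemb g
    _ = 𝓕 φ (intVec k) := integral_mFourier_neg_mul φ k

lemma summable_norm_apply (ψ : 𝓢(Rd d, ℂ)) {p : (Fin d → ℤ) → Rd d} (hp : SpreadsLinearly p) :
    Summable fun n => ‖ψ (p n)‖ :=
  (hp.summable_one_add_norm_pow_inv.mul_left _).of_nonneg_of_le (fun _ => norm_nonneg _) fun _ =>
    norm_apply_le_sup_seminorm_mul ℂ ψ (d + 1) _

lemma spreadsLinearly_intVec : SpreadsLinearly (intVec (d := d)) :=
  .of_map_eq_intVec_add (.id ℝ (Rd d)) 0 fun n => (add_zero (intVec n)).symm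

theorem tsum_add_intVec_eq_tsum_fourier (φ : 𝓢(Rd d, ℂ)) (x : Rd d) :
    ∑' n, φ (x + intVec n) = ∑' k, 𝓕 φ (intVec k) * e2pi (intVec k) x := by
  have hsum : Summable (UnitAddTorus.mFourierCoeff (torusPeriodization φ)) := by
    simp only [funext (mFourierCoeff_torusPeriodization φ)]
    exact (summable_norm_apply (𝓕 φ) spreadsLinearly_intVec).of_norm
  have h := UnitAddTorus.hasSum_mFourier_series_apply_of_summable hsum (toTorus x)
  simpa only [mFourierCoeff_torusPeriodization, mFourier_toTorus, torusPeriodization_toTorus,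
    smul_eq_mul] using h.tsum_eq.symm

end Poisson

section LatticePoisson

open scoped FourierTransform

variable {V E : Type*} [NormedAddCommGroup V] [InnerProductSpace ℝ V] [FiniteDimensional ℝ V]
  [MeasurableSpace V] [BorelSpace V] [NormedAddCommGroup E] [NormedSpace ℂ E]

lemma fourier_comp_continuousLinearEquiv (f : V → E) (A : V ≃L[ℝ] V) (w : V) :
    𝓕 (f ∘ A) w = |(LinearMap.det (A : V →ₗ[ℝ] V))⁻¹| •
      𝓕 f (ContinuousLinearMap.adjoint (A.symm : V →L[ℝ] V) w) := by
  have hmap := Measure.map_linearMap_addHaar_eq_smul_addHaar volume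
    (LinearEquiv.isUnit_det' A.toLinearEquiv).ne_zero
  have hint (g : V → E) : ∫ v, g (A v) = |(LinearMap.det (A : V →ₗ[ℝ] V))⁻¹| • ∫ v, g v := by
    rw [← ENNReal.toReal_ofReal (abs_nonneg _), ← integral_smul_measure, ← hmap]
    exact (A.toHomeomorph.measurableEmbedding.integral_map g).symm
  rw [Real.fourier_eq, Real.fourier_eq, ← hint]
  simp only [ContinuousLinearMap.adjoint_inner_right, ContinuousLinearEquiv.coe_coe,
    ContinuousLinearEquiv.symm_apply_apply, Function.comp_apply]

lemma fourier_fourier_apply [CompleteSpace E] (φ : 𝓢(V, E)) (w : V) :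
    𝓕 (𝓕 φ) w = φ (-w) := by
  have hinv : 𝓕⁻ (𝓕 φ) = φ := FourierTransform.fourierInv_fourier_eq φ
  calc 𝓕 (𝓕 φ) w
    _ = 𝓕⁻ (𝓕 φ) (-w) := by
      rw [SchwartzMap.fourierInv_coe, Real.fourierInv_eq_fourier_neg, neg_neg,
        SchwartzMap.fourier_coe]
    _ = φ (-w) := by rw [hinv]

variable {d : ℕ}

/-- The enumeration by `k ∈ ℤ^d` of the lattice dual to `A ℤ^d`, with the sign that makes Poisson
summation produce values of `φ` rather than of `φ (-·)`. -/
def dualPoint (A : Rd d ≃L[ℝ] Rd d) (k : Fin d → ℤ) : Rd d :=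
  -ContinuousLinearMap.adjoint (A.symm : Rd d →L[ℝ] Rd d) (intVec k)

lemma spreadsLinearly_map_intVec_add (A : Rd d ≃L[ℝ] Rd d) (t : Rd d) :
    SpreadsLinearly fun n => A (intVec n + t) :=
  .of_map_eq_intVec_add (A.symm : Rd d →L[ℝ] Rd d) t fun _ => A.symm_apply_apply _

lemma spreadsLinearly_dualPoint (A : Rd d ≃L[ℝ] Rd d) : SpreadsLinearly (dualPoint A) := by
  refine .of_map_eq_intVec_add (-ContinuousLinearMap.adjoint (A : Rd d →L[ℝ] Rd d)) 0 fun k => ?_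
  rw [dualPoint, neg_apply, map_neg, neg_neg, add_zero,
    ← ContinuousLinearMap.comp_apply, ← ContinuousLinearMap.adjoint_comp,
    A.coe_symm_comp_coe, ContinuousLinearMap.adjoint_id, ContinuousLinearMap.id_apply]

theorem tsum_fourier_lattice_coset (φ : 𝓢(Rd d, ℂ)) (A : Rd d ≃L[ℝ] Rd d) (t : Rd d) :
    ∑' n, 𝓕 φ (A (intVec n + t)) = ∑' k,
      (|(LinearMap.det (A : Rd d →ₗ[ℝ] Rd d))⁻¹| * e2pi (intVec k) t) * φ (dualPoint A k) := by
  let ψ : 𝓢(Rd d, ℂ) := SchwartzMap.compCLMOfContinuousLinearEquiv ℂ A (𝓕 φ)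
  have hψ (k : Fin d → ℤ) : 𝓕 ψ (intVec k) =
      |(LinearMap.det (A : Rd d →ₗ[ℝ] Rd d))⁻¹| * φ (dualPoint A k) := by
    rw [SchwartzMap.fourier_coe, SchwartzMap.compCLMOfContinuousLinearEquiv_apply,
      fourier_comp_continuousLinearEquiv, ← SchwartzMap.fourier_coe, fourier_fourier_apply,
      Complex.real_smul, dualPoint]
  have hpoisson := tsum_add_intVec_eq_tsum_fourier ψ t
  simp only [hψ, add_comm t] at hpoisson
  refine hpoisson.trans (tsum_congr fun k => ?_)
  ring

end LatticePoisson

/-! ### Pure point measures given by weighted families of points -/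

/-- A family of point masses `∑ i, w i δ_(p i)` is *tempered* if some negative power of `1 + ‖x‖`
is integrable against its total variation, so that it acts on Schwartz functions. -/
def IsTemperedFamily {ι E : Type*} [Norm E] (w : ι → ℂ) (p : ι → E) : Prop :=
  ∃ k : ℕ, Summable fun i => ‖w i‖ * ((1 + ‖p i‖) ^ k)⁻¹

/-- The mass at `γ` of the measure `∑ i, w i δ_(p i)`; the points `p i` need not be distinct. -/
def atomMass {ι E : Type*} (w : ι → ℂ) (p : ι → E) (γ : E) : ℂ :=
  ∑' i : {i // p i = γ}, w i

section AtomMass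

variable {ι E : Type*} {w : ι → ℂ} {p : ι → E}

lemma setOf_atomMass_ne_zero_subset_range : {γ | atomMass w p γ ≠ 0} ⊆ Set.range p := by
  intro γ hγ
  by_contra hrange
  have : IsEmpty {i // p i = γ} := ⟨fun i => hrange ⟨i, i.2⟩⟩
  exact hγ tsum_empty

lemma atomMass_apply_of_injective (hp : Function.Injective p) (i : ι) :
    atomMass w p (p i) = w i :=
  tsum_eq_single (⟨i, rfl⟩ : {j // p j = p i}) fun j hj => absurd (Subtype.ext (hp j.2)) hj

lemma setOf_atomMass_ne_zero_eq_range (hp : Function.Injective p) (hw : ∀ i, w i ≠ 0) :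
    {γ | atomMass w p γ ≠ 0} = Set.range p := by
  refine setOf_atomMass_ne_zero_subset_range.antisymm ?_
  rintro _ ⟨i, rfl⟩
  rw [mem_ofPred_eq, atomMass_apply_of_injective hp]
  exact hw i

lemma ballVar_atomMass_le {d : ℕ} (w : ι → ℂ) (p : ι → Rd d) (r : ℝ) :
    ballVar (atomMass w p) r ≤ ∑' i, if ‖p i‖ < r then ‖w i‖ₑ else 0 := by
  rw [← (Equiv.sigmaFiberEquiv p).tsum_eq, ENNReal.tsum_sigma']
  refine ENNReal.tsum_le_tsum fun γ => ?_
  have hfiber (i : {i // p i = γ}) : ‖p i‖ = ‖γ‖ := by rw [i.2]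
  simp only [Equiv.sigmaFiberEquiv_apply, hfiber]
  split_ifs
  · exact enorm_tsum_le_tsum_enorm
  · exact zero_le

end AtomMass

namespace IsTemperedFamily

section Normed

variable {ι E : Type*} [NormedAddCommGroup E] {w : ι → ℂ} {p : ι → E}

lemma summable_norm_fiber (h : IsTemperedFamily w p) (γ : E) :
    Summable fun i : {i // p i = γ} => ‖w i‖ := by
  obtain ⟨k, hk⟩ := h
  have hfiber : Summable fun i : {i // p i = γ} => ‖w i‖ * ((1 + ‖p i‖) ^ k)⁻¹ :=
    hk.subtype {i | p i = γ}
  have : ((1 + ‖γ‖) ^ k)⁻¹ ≠ 0 := by positivity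
  refine (summable_mul_right_iff this).1 (hfiber.congr fun i => ?_)
  rw [i.2]

lemma norm_atomMass_le (h : IsTemperedFamily w p) (γ : E) :
    ‖atomMass w p γ‖ ≤ ∑' i : {i // p i = γ}, ‖w i‖ :=
  norm_tsum_le_tsum_norm (h.summable_norm_fiber γ)

variable [NormedSpace ℝ E]

lemma summable_norm_mul_norm_apply (h : IsTemperedFamily w p) (φ : 𝓢(E, ℂ)) :
    Summable fun i => ‖w i‖ * ‖φ (p i)‖ := by
  obtain ⟨k, hk⟩ := h
  let S := 2 ^ k * (Finset.Iic (k, 0)).sup (fun m => SchwartzMap.seminorm ℂ m.1 m.2) φ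
  refine (hk.mul_left S).of_nonneg_of_le (fun i => by positivity) fun i => ?_
  rw [mul_left_comm]
  gcongr
  exact norm_apply_le_sup_seminorm_mul ℂ φ k (p i)

lemma summable_mul_apply (h : IsTemperedFamily w p) (φ : 𝓢(E, ℂ)) :
    Summable fun i => w i * φ (p i) := by
  refine .of_norm ?_
  simpa only [norm_mul] using h.summable_norm_mul_norm_apply φ

/-- The tempered distribution `φ ↦ ∑ i, w i φ(p i)` of a tempered family of point masses. -/
def toDistribution (h : IsTemperedFamily w p) : 𝓢(E, ℂ) →L[ℂ] ℂ :=
  SchwartzMap.mkCLMtoNormedSpace (fun φ => ∑' i, w i * φ (p i))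
    (fun φ ψ => by
      rw [← (h.summable_mul_apply φ).tsum_add (h.summable_mul_apply ψ)]
      simp only [add_apply, mul_add])
    (fun c φ => by
      simp only [smul_apply, RingHom.id_apply, smul_eq_mul, mul_left_comm _ c,
        tsum_mul_left])
    (by
      obtain ⟨k, hk⟩ := h
      refine ⟨Finset.Iic (k, 0), 2 ^ k * ∑' i, ‖w i‖ * ((1 + ‖p i‖) ^ k)⁻¹, by positivity,
        fun φ => ?_⟩
      rw [mul_right_comm]
      refine tsum_of_norm_bounded (hk.hasSum.mul_left _) fun i => ?_
      rw [norm_mul, mul_left_comm]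
      gcongr
      exact norm_apply_le_sup_seminorm_mul ℂ φ k (p i))

lemma toDistribution_apply (h : IsTemperedFamily w p) (φ : 𝓢(E, ℂ)) :
    h.toDistribution φ = ∑' i, w i * φ (p i) := rfl

end Normed

variable {ι : Type*} {d : ℕ} {w : ι → ℂ} {p : ι → Rd d}

lemma repMeasure [Countable ι] (h : IsTemperedFamily w p) {f : TemperedDist d}
    (hf : ∀ φ, f φ = ∑' i, w i * φ (p i)) : RepMeasure (atomMass w p) f := by
  let e := Equiv.sigmaFiberEquiv p
  refine ⟨(Set.countable_range p).mono setOf_atomMass_ne_zero_subset_range, fun φ => ?_,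
    fun φ => ?_⟩
  · have hsum : Summable fun γ => ∑' i : {i // p i = γ}, ‖w i‖ * ‖φ (p i)‖ :=
      (e.summable_iff.2 (h.summable_norm_mul_norm_apply φ)).sigma
    refine hsum.of_nonneg_of_le (fun _ => by positivity) fun γ => ?_
    calc ‖atomMass w p γ‖ * ‖φ γ‖
      _ ≤ (∑' i : {i // p i = γ}, ‖w i‖) * ‖φ γ‖ := by gcongr; exact h.norm_atomMass_le γ
      _ = ∑' i : {i // p i = γ}, ‖w i‖ * ‖φ (p i)‖ := by
        rw [← tsum_mul_right]
        exact tsum_congr fun i => by rw [i.2]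
  · calc f φ
      _ = ∑' x, w (e x) * φ (p (e x)) := by rw [hf, ← e.tsum_eq]
      _ = ∑' γ, ∑' i : {i // p i = γ}, w i * φ (p i) :=
        (e.summable_iff.2 (h.summable_mul_apply φ)).tsum_sigma
      _ = ∑' γ, atomMass w p γ * φ γ := by
        refine tsum_congr fun γ => ?_
        rw [atomMass, ← tsum_mul_right]
        exact tsum_congr fun i => by rw [i.2]

end IsTemperedFamily

/-! ### Superpositions of lattice cosets -/

section Mixture

lemma exists_pos_forall_summable_mul {ι : Type*} [Finite ι] (u : ι → ℕ → ℝ) :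
    ∃ c : ℕ → ℝ, (∀ j, 0 < c j) ∧ ∀ i, Summable fun j => c j * u i j := by
  have := Fintype.ofFinite ι
  refine ⟨fun j => (1 / 2) ^ j / (1 + ∑ i, |u i j|), fun j => by positivity,
    fun i => summable_geometric_two.of_norm_bounded fun j => ?_⟩
  rw [norm_mul, Real.norm_of_nonneg (by positivity), div_mul_eq_mul_div,
    div_le_iff₀ (by positivity)]
  gcongr
  calc ‖u i j‖
    _ ≤ ∑ i, |u i j| :=
      Finset.single_le_sum (f := fun i => |u i j|) (fun _ _ => abs_nonneg _) (Finset.mem_univ i)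
    _ ≤ 1 + ∑ i, |u i j| := le_add_of_nonneg_left zero_le_one

variable {κ E : Type*} {d : ℕ} {w : κ × (Fin d → ℤ) → ℂ} {c : κ → ℝ}
  {p : κ → (Fin d → ℤ) → E}

lemma isTemperedFamily_uncurry [SeminormedAddCommGroup E] (hw : ∀ i, ‖w i‖ = c i.1)
    (hp : ∀ j, SpreadsLinearly (p j))
    (hc : Summable fun j => c j * ∑' n, ((1 + ‖p j n‖) ^ (d + 1))⁻¹) :
    IsTemperedFamily w (Function.uncurry p) := by
  refine ⟨d + 1, (summable_prod_of_nonneg fun i => by positivity).2 ⟨fun j => ?_, ?_⟩⟩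
  · simp only [hw]
    exact (hp j).summable_one_add_norm_pow_inv.mul_left (c j)
  · simpa only [hw, tsum_mul_left, Function.uncurry_apply_pair] using hc

lemma exists_ballVar_atomMass_uncurry_le {p : κ → (Fin d → ℤ) → Rd d} {D : κ → ℝ}
    (hw : ∀ i, ‖w i‖ = c i.1) (hc0 : ∀ j, 0 ≤ c j) (hD0 : ∀ j, 0 ≤ D j)
    (hD : ∀ j, ∀ r : ℝ, 1 ≤ r →
      (({n | ‖p j n‖ < r}.encard : ℕ∞) : ℝ≥0∞) ≤ ENNReal.ofReal (D j * r ^ d))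
    (hc : Summable fun j => c j * D j) :
    ∃ C : ℝ, ∀ r : ℝ, 1 ≤ r →
      ballVar (atomMass w (Function.uncurry p)) r ≤ ENNReal.ofReal (C * r ^ d) := by
  refine ⟨∑' j, c j * D j, fun r hr => ?_⟩
  have hcount (j : κ) : ∑' n, (if ‖p j n‖ < r then ENNReal.ofReal (c j) else 0) =
      ENNReal.ofReal (c j) * ({n | ‖p j n‖ < r}.encard : ℕ∞) := by
    rw [mul_comm, ← ENNReal.tsum_set_const]
    exact (tsum_subtype {n | ‖p j n‖ < r} fun _ => ENNReal.ofReal (c j)).symm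
  calc ballVar (atomMass w (Function.uncurry p)) r
    _ ≤ ∑' i : κ × (Fin d → ℤ), if ‖p i.1 i.2‖ < r then ENNReal.ofReal (c i.1) else 0 := by
      simp only [← hw, ofReal_norm]
      exact ballVar_atomMass_le w _ r
    _ = ∑' j, ENNReal.ofReal (c j) * ({n | ‖p j n‖ < r}.encard : ℕ∞) := by
      rw [ENNReal.tsum_prod', tsum_congr hcount]
    _ ≤ ∑' j, ENNReal.ofReal (c j) * ENNReal.ofReal (D j * r ^ d) := by
      gcongr with j
      exact hD j r hr
    _ = ∑' j, ENNReal.ofReal (c j * D j * r ^ d) := by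
      simp only [← ENNReal.ofReal_mul (hc0 _), mul_assoc]
    _ = ENNReal.ofReal ((∑' j, c j * D j) * r ^ d) := by
      have hnonneg (j : κ) : 0 ≤ c j * D j * r ^ d :=
        mul_nonneg (mul_nonneg (hc0 j) (hD0 j)) (by positivity)
      rw [← ENNReal.ofReal_tsum_of_nonneg hnonneg (hc.mul_right _), tsum_mul_right]

lemma norm_e2pi (x y : Rd d) : ‖e2pi x y‖ = 1 := by
  rw [e2pi, mul_right_comm, ← Complex.ofReal_mul, Complex.norm_exp_ofReal_mul_I]

variable (A : κ → Rd d ≃L[ℝ] Rd d) (t : κ → Rd d)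

/-- The points of the cosets `A j (ℤ^d + t j)`. -/
def cosetPoint (j : κ) (n : Fin d → ℤ) : Rd d :=
  A j (intVec n + t j)

/-- The mass that the Fourier transform of `∑ j, c j • ∑ n, δ_(cosetPoint A t j n)` carries at
the `k`-th point of the lattice dual to `A j ℤ^d`, by Poisson summation. -/
def dualWeight (c : κ → ℝ) (i : κ × (Fin d → ℤ)) : ℂ :=
  c i.1 * (|(LinearMap.det (A i.1 : Rd d →ₗ[ℝ] Rd d))⁻¹| * e2pi (intVec i.2) (t i.1))

variable {A t}

lemma norm_dualWeight (hc0 : ∀ j, 0 ≤ c j) (i : κ × (Fin d → ℤ)) :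
    ‖dualWeight A t c i‖ = c i.1 * |(LinearMap.det (A i.1 : Rd d →ₗ[ℝ] Rd d))⁻¹| := by
  rw [dualWeight, norm_mul, norm_mul, norm_e2pi, mul_one, Complex.norm_real, Complex.norm_real,
    Real.norm_of_nonneg (hc0 _), Real.norm_of_nonneg (abs_nonneg _)]

lemma fourierTD_toDistribution_cosets
    (hp : IsTemperedFamily (fun i => (c i.1 : ℂ)) (Function.uncurry (cosetPoint A t)))
    (hq : IsTemperedFamily (dualWeight A t c) (Function.uncurry fun j => dualPoint (A j)))
    (φ : 𝓢(Rd d, ℂ)) :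
    fourierTD hp.toDistribution φ =
      ∑' i, dualWeight A t c i * φ (Function.uncurry (fun j => dualPoint (A j)) i) := by
  change ∑' i, _ * fourierTransformCLM ℂ φ _ = _
  rw [(hp.summable_mul_apply _).tsum_prod, (hq.summable_mul_apply φ).tsum_prod]
  refine tsum_congr fun j => ?_
  simp only [dualWeight, mul_assoc (c j : ℂ), tsum_mul_left]
  exact congrArg _ (tsum_fourier_lattice_coset φ (A j) (t j))

theorem exists_repMeasure_support_eq_range_cosetPoint {A : ℕ → Rd d ≃L[ℝ] Rd d} {t : ℕ → Rd d}
    (hinj : Function.Injective (Function.uncurry (cosetPoint A t))) :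
    ∃ (a : Rd d → ℂ) (f : TemperedDist d) (b : Rd d → ℂ),
      RepMeasure a f ∧ {x | a x ≠ 0} = Set.range (Function.uncurry (cosetPoint A t)) ∧
      RepMeasure b (fourierTD f) ∧
      ∃ C : ℝ, ∀ r : ℝ, 1 ≤ r → ballVar b r ≤ ENNReal.ofReal (C * r ^ d) := by
  let δ (j : ℕ) := |(LinearMap.det (A j : Rd d →ₗ[ℝ] Rd d))⁻¹|
  have hspread (j : ℕ) : SpreadsLinearly (cosetPoint A t j) :=
    spreadsLinearly_map_intVec_add (A j) (t j)
  have hspread' (j : ℕ) : SpreadsLinearly (dualPoint (A j)) := spreadsLinearly_dualPoint (A j)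
  choose D hD0 hD using fun j => (hspread' j).exists_encard_norm_lt_le
  obtain ⟨c, hc, hsum⟩ := exists_pos_forall_summable_mul
    ![fun j => ∑' n, ((1 + ‖cosetPoint A t j n‖) ^ (d + 1))⁻¹,
      fun j => δ j * ∑' k, ((1 + ‖dualPoint (A j) k‖) ^ (d + 1))⁻¹,
      fun j => δ j * D j]
  have hw : ∀ i, ‖dualWeight A t c i‖ = c i.1 * δ i.1 := norm_dualWeight fun j => (hc j).le
  have hp : IsTemperedFamily (fun i => (c i.1 : ℂ)) (Function.uncurry (cosetPoint A t)) :=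
    isTemperedFamily_uncurry (fun i => Complex.norm_of_nonneg (hc i.1).le) hspread (hsum 0)
  have hq : IsTemperedFamily (dualWeight A t c) (Function.uncurry fun j => dualPoint (A j)) :=
    isTemperedFamily_uncurry (c := fun j => c j * δ j) hw hspread'
      ((hsum 1).congr fun j => (mul_assoc _ _ _).symm)
  exact ⟨_, hp.toDistribution, _, hp.repMeasure hp.toDistribution_apply,
    setOf_atomMass_ne_zero_eq_range hinj fun i => Complex.ofReal_ne_zero.2 (hc i.1).ne',
    hq.repMeasure (fourierTD_toDistribution_cosets hp hq),
    exists_ballVar_atomMass_uncurry_le (c := fun j => c j * δ j) hw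
      (fun j => mul_nonneg (hc j).le (abs_nonneg _)) hD0 hD
      ((hsum 2).congr fun j => (mul_assoc _ _ _).symm)⟩

end Mixture

/-! ### Translates of lattices and rational independence -/

section Geometry

lemma exists_linearIndependent_nat_real : ∃ s : ℕ → ℝ, LinearIndependent ℚ s := by
  let B := Module.Basis.ofVectorSpace ℚ ℝ
  have : Infinite (Module.Basis.ofVectorSpaceIndex ℚ ℝ) := by
    rw [Cardinal.infinite_iff, B.mk_eq_rank'', Real.rank_rat_real]
    exact Cardinal.aleph0_le_continuum
  exact ⟨_, B.linearIndependent.comp _ (Infinite.natEmbedding _).injective⟩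

variable {d : ℕ}

lemma intVec_eq_sum_smul_single (n : Fin d → ℤ) :
    intVec n = ∑ i, n i • EuclideanSpace.single i (1 : ℝ) := by
  ext j
  simp [WithLp.ofLp_sum, Finset.sum_apply, Pi.single_apply]

lemma IsFullRankLattice.exists_finite_subset_span {L : Set (Rd d)} (hL : IsFullRankLattice L) :
    ∃ S : Set (Rd d), S.Finite ∧ L ⊆ Submodule.span ℚ S := by
  obtain ⟨T, -, rfl⟩ := hL
  refine ⟨Set.range fun i => T (EuclideanSpace.single i 1), Set.finite_range _, ?_⟩
  rintro _ ⟨x, hx, rfl⟩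
  choose n hn using hx
  obtain rfl : x = intVec n := PiLp.ext hn
  rw [intVec_eq_sum_smul_single, map_sum]
  refine sum_mem fun i _ => ?_
  rw [map_zsmul]
  exact zsmul_mem (Submodule.subset_span (mem_range_self i)) _

theorem not_subset_iUnion_translates_of_linearIndependent {κ : Type*} [Infinite κ]
    {X : Set (Rd d)} {x : κ → Rd d} (hx : LinearIndependent ℚ x) (hX : Set.range x ⊆ X) :
    ¬ ∃ (J : ℕ) (L : Fin J → Set (Rd d)) (v : Fin J → Rd d),
      (∀ j, IsFullRankLattice (L j)) ∧ X ⊆ ⋃ j, (fun y => v j + y) '' (L j) := by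
  rintro ⟨J, L, v, hL, hcover⟩
  choose S hS hLS using fun j => (hL j).exists_finite_subset_span
  let U : Set (Rd d) := Set.range v ∪ ⋃ j, S j
  have : Finite U := ((Set.finite_range v).union (Set.finite_iUnion hS)).to_subtype
  have hspan : Set.range x ⊆ Submodule.span ℚ U := by
    intro y hy
    obtain ⟨j, z, hz, rfl⟩ := mem_iUnion.1 (hcover (hX hy))
    have hSU : S j ⊆ U := (subset_iUnion S j).trans subset_union_right
    exact add_mem (Submodule.subset_span (subset_union_left (mem_range_self j)))
      (Submodule.span_mono hSU (hLS j hz))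
  have := hx.finite_of_le_span_finite _ U hspan
  exact not_finite κ

end Geometry

/-! ### Dyadically stretched cosets -/

section Stretched

lemma two_pow_mul_odd_injective :
    Function.Injective fun x : ℕ × ℤ => 2 ^ x.1 * (2 * x.2 + 1) := by
  have hval (j : ℕ) (n : ℤ) : padicValInt 2 (2 ^ j * (2 * n + 1)) = j := by
    have hodd : ¬ (2 : ℤ) ∣ 2 * n + 1 := by lia
    rw [padicValInt.mul (by positivity) (by lia), padicValInt.eq_zero_of_not_dvd hodd, add_zero]
    exact_mod_cast padicValNat.prime_pow (p := 2) j
  rintro ⟨j, n⟩ ⟨j', n'⟩ h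
  dsimp only at h
  obtain rfl : j = j' := by rw [← hval j n, ← hval j' n', h]
  have := mul_left_cancel₀ (pow_ne_zero j two_ne_zero) h
  rw [Prod.mk.injEq]
  lia

variable {d : ℕ}

/-- The diagonal map of `ℝ^d` with diagonal entries `u i`. -/
def diagEquiv (u : Fin d → ℝˣ) : Rd d ≃L[ℝ] Rd d :=
  (PiLp.continuousLinearEquiv 2 ℝ fun _ : Fin d => ℝ).trans
    ((ContinuousLinearEquiv.piCongrRight fun i => ContinuousLinearEquiv.smulLeft (u i)).trans
      (PiLp.continuousLinearEquiv 2 ℝ fun _ : Fin d => ℝ).symm)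

lemma diagEquiv_apply (u : Fin d → ℝˣ) (x : Rd d) (i : Fin d) :
    diagEquiv u x i = u i * x i := rfl

/-- The `n`-th point of the coset with coordinates in `s j + ℤ` in direction `i₀`, in
`2 ^ j (2ℤ + 1) = 2 ^ (j + 1) (ℤ + 1 / 2)` in direction `i₁`, and in `ℤ` in the others. -/
def stretchedPoint (s : ℕ → ℝ) (i₀ i₁ : Fin d) (j : ℕ) (n : Fin d → ℤ) : Rd d :=
  cosetPoint (fun j => diagEquiv (Pi.mulSingle i₁ (Units.mk0 2 two_ne_zero ^ (j + 1))))
    (fun j => EuclideanSpace.single i₀ (s j) + EuclideanSpace.single i₁ (1 / 2)) j n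

variable {s : ℕ → ℝ} {i₀ i₁ : Fin d}

lemma stretchedPoint_apply_left (h : i₀ ≠ i₁) (j : ℕ) (n : Fin d → ℤ) :
    stretchedPoint s i₀ i₁ j n i₀ = n i₀ + s j := by
  simp [stretchedPoint, cosetPoint, diagEquiv_apply, h]

lemma stretchedPoint_apply_right (h : i₀ ≠ i₁) (j : ℕ) (n : Fin d → ℤ) :
    stretchedPoint s i₀ i₁ j n i₁ = (2 ^ j * (2 * n i₁ + 1) : ℤ) := by
  simp only [stretchedPoint, cosetPoint, diagEquiv_apply, Pi.mulSingle_eq_same,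
    Units.val_pow_eq_pow_val, Units.val_mk0, PiLp.add_apply, intVec_apply,
    PiLp.single_eq_of_ne _ h.symm, PiLp.single_eq_same]
  push_cast
  ring

lemma stretchedPoint_sub_apply (j : ℕ) {i : Fin d} (h : i ≠ i₁) (m n : Fin d → ℤ) :
    (stretchedPoint s i₀ i₁ j m - stretchedPoint s i₀ i₁ j n) i = (m i - n i : ℤ) := by
  simp [stretchedPoint, cosetPoint, diagEquiv_apply, h]

lemma one_le_dist_of_sub_apply_eq_intCast {x y : Rd d} {i : Fin d} {m : ℤ}
    (h : (x - y) i = m) (hm : m ≠ 0) : 1 ≤ dist x y := calc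
  1 ≤ ‖(m : ℝ)‖ := by
    rw [Int.norm_cast_real, Int.norm_eq_abs]
    exact_mod_cast Int.one_le_abs hm
  _ = ‖(x - y) i‖ := by rw [h]
  _ ≤ dist x y := by
    rw [dist_eq_norm]
    exact PiLp.norm_apply_le _ i

lemma one_le_dist_stretchedPoint (h : i₀ ≠ i₁) {x y : ℕ × (Fin d → ℤ)} (hxy : x ≠ y) :
    1 ≤ dist (stretchedPoint s i₀ i₁ x.1 x.2) (stretchedPoint s i₀ i₁ y.1 y.2) := by
  obtain ⟨j, m⟩ := x
  obtain ⟨j', n⟩ := y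
  by_cases heq : ((2 : ℤ) ^ j * (2 * m i₁ + 1)) = 2 ^ j' * (2 * n i₁ + 1)
  · obtain ⟨rfl, hi₁⟩ := Prod.mk.inj
      (two_pow_mul_odd_injective (a₁ := (j, m i₁)) (a₂ := (j', n i₁)) heq)
    obtain ⟨i, hi⟩ : ∃ i, m i ≠ n i :=
      Function.ne_iff.1 fun hmn => hxy (congrArg (Prod.mk j) hmn)
    have hne : i ≠ i₁ := fun hii => hi (hii ▸ hi₁)
    exact one_le_dist_of_sub_apply_eq_intCast (stretchedPoint_sub_apply j hne m n)
      (sub_ne_zero.2 hi)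
  · refine one_le_dist_of_sub_apply_eq_intCast (i := i₁) ?_ (sub_ne_zero.2 heq)
    rw [PiLp.sub_apply, stretchedPoint_apply_right h, stretchedPoint_apply_right h, Int.cast_sub]

lemma stretchedPoint_injective (h : i₀ ≠ i₁) :
    Function.Injective (Function.uncurry (stretchedPoint s i₀ i₁)) := by
  intro x y hxy
  by_contra hne
  have hdist : 1 ≤ dist (Function.uncurry (stretchedPoint s i₀ i₁) x)
    (Function.uncurry (stretchedPoint s i₀ i₁) y) := one_le_dist_stretchedPoint h hne
  rw [hxy, dist_self] at hdist
  exact zero_lt_one.not_ge hdist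

lemma uniformlyDiscrete_range_stretchedPoint (h : i₀ ≠ i₁) :
    UniformlyDiscrete (Set.range (Function.uncurry (stretchedPoint s i₀ i₁))) := by
  refine ⟨1, one_pos, ?_⟩
  rintro _ ⟨x, rfl⟩ _ ⟨y, rfl⟩ hxy
  exact one_le_dist_stretchedPoint h fun heq => hxy (congrArg _ heq)

lemma linearIndependent_stretchedPoint (h : i₀ ≠ i₁) (hs : LinearIndependent ℚ s) :
    LinearIndependent ℚ fun j => stretchedPoint s i₀ i₁ j 0 := by
  let π := (EuclideanSpace.proj i₀ : Rd d →L[ℝ] ℝ).toLinearMap.restrictScalars ℚ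
  have hcoord : (π ∘ fun j => stretchedPoint s i₀ i₁ j 0) = s := funext fun j =>
    (stretchedPoint_apply_left h j 0).trans (by simp)
  exact .of_comp π (by rwa [hcoord])

end Stretched

theorem statement14_general {d : ℕ} (hd : 2 ≤ d) :
    ∃ (a : Rd d → ℂ) (f : TemperedDist d) (b : Rd d → ℂ),
      RepMeasure a f ∧
      UniformlyDiscrete {x | a x ≠ 0} ∧
      RepMeasure b (fourierTD f) ∧
      (∃ C r₀ : ℝ, ∀ r ≥ r₀, ballVar b r ≤ ENNReal.ofReal (C * r ^ d)) ∧
      ¬ ∃ (J : ℕ) (L : Fin J → Set (Rd d)) (v : Fin J → Rd d),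
          (∀ j, IsFullRankLattice (L j)) ∧
          {x | a x ≠ 0} ⊆ ⋃ j, (fun y => v j + y) '' (L j) := by
  have := Fin.nontrivial_iff_two_le.2 hd
  obtain ⟨i₀, i₁, hi⟩ := exists_pair_ne (Fin d)
  obtain ⟨s, hs⟩ := exists_linearIndependent_nat_real
  obtain ⟨a, f, b, hf, hsupp, hb, C, hC⟩ :=
    exists_repMeasure_support_eq_range_cosetPoint (stretchedPoint_injective (s := s) hi)
  refine ⟨a, f, b, hf, ?_, hb, ⟨C, 1, hC⟩, ?_⟩
  · rw [hsupp]
    exact uniformlyDiscrete_range_stretchedPoint hi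
  · rw [hsupp]
    exact not_subset_iUnion_translates_of_linearIndependent
      (linearIndependent_stretchedPoint hi hs) (range_subset_iff.2 fun j => ⟨(j, 0), rfl⟩)

/-- (The example after Theorem 9.) There exists a pure point
measure `μ` in `S*(ℝ²)` with uniformly discrete support, whose Fourier
transform is a pure point measure with `|μ̂|(B(0,r)) = O(r²)`, but whose
support is not contained in any finite union of translates of full-rank
lattices. -/
theorem statement14 :
    ∃ (a : Rd 2 → ℂ) (f : TemperedDist 2) (b : Rd 2 → ℂ),
      RepMeasure a f ∧
      UniformlyDiscrete {x | a x ≠ 0} ∧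
      RepMeasure b (fourierTD f) ∧
      (∃ C r₀ : ℝ, ∀ r ≥ r₀, ballVar b r ≤ ENNReal.ofReal (C * r ^ 2)) ∧
      ¬ ∃ (J : ℕ) (L : Fin J → Set (Rd 2)) (v : Fin J → Rd 2),
          (∀ j, IsFullRankLattice (L j)) ∧
          {x | a x ≠ 0} ⊆ ⋃ j, (fun y => v j + y) '' (L j) :=
  statement14_general le_rfl
end
end
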